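/- arXiv:1007.1575 — 3 statements merged into one kernel-verified Lean document; each statement's English description precedes it below -/
import Mathlib

section
/- Let A and V be bounded self-adjoint operators on H. Suppose spectrum(A) = ω ∪ Ω for nonempty closed sets ω, Ω with d := dist(ω, Ω) > 0. Let P be the spectral projection of A associated with ω, and assume V is off-diagonal with respect to the decomposition H = Ran P ⊕ ker P, i.e., P V P = 0 and (I − P) V (I − P) = 0. Let c* be the unique positive real number with ∫_0^{c*} (2 − √(1 + 4τ²))^{−1} dτ = 1 (one has c* < √3/2). If ‖V‖ < c* · d, then, with Q the unique orthogonal projection commuting with A + V such that the spectrum of the restriction of A + V to Ran Q is contained in O_{d/2}(ω) and the spectrum of the restriction of A + V to ker Q is contained in O_{d/2}(Ω), one has ‖P − Q‖ ≤ sin( (π/2) ∫_0^{‖V‖/d} (2 − √(1 + 4τ²))^{−1} dτ ) < 1. -/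
open ContinuousLinearMap

/-- The spectral projection of a bounded self-adjoint operator `B` associated with a part `ω`
of its spectrum that is separated from the rest: it is obtained by applying the continuous
functional calculus to the indicator function of `ω`. It is the unique orthogonal projection
commuting with `B` such that the spectrum of the restriction of `B` to its range is contained
in `ω` and the spectrum of the restriction of `B` to its kernel is contained in the complement
part. -/
noncomputable def spectralProj {H : Type*} [NormedAddCommGroup H] [InnerProductSpace ℂ H]
    [CompleteSpace H] (B : H →L[ℂ] H) (ω : Set ℝ) : H →L[ℂ] H :=
  cfc (Set.indicator ω (fun _ => (1:ℝ))) B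

/-- The distance `dist(s,t) = inf{|x − y| : x ∈ s, y ∈ t}` between two sets of reals. -/
noncomputable def setDist (s t : Set ℝ) : ℝ :=
  sInf (Set.image2 dist s t)

/-- A family of sets `{ω_t}_{t ∈ I}` is upper semicontinuous on `I` if for every `t ∈ I` and
`ε > 0` there is `δ > 0` such that `sup_{λ ∈ ω_s} dist(λ, ω_t) < ε` (i.e. `ω_s` is contained
in the open `ε`-neighborhood of `ω_t`) whenever `s ∈ I` and `|s − t| < δ`. -/
def UpperSemicontinuousFamilyOn (ω : ℝ → Set ℝ) (I : Set ℝ) : Prop :=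
  ∀ t ∈ I, ∀ ε > (0:ℝ), ∃ δ > (0:ℝ), ∀ s ∈ I, |s - t| < δ →
    ω s ⊆ Metric.thickening ε (ω t)

section
open MeasureTheory Set Filter Topology

section
lemma spo_coth_series (u : ℝ) (hu : 0 < u) :
    HasSum (fun n : ℕ => 2 * u / (u ^ 2 + ((n:ℝ) + 1) ^ 2))
      (Real.pi * ((1 + Real.exp (-(2 * Real.pi * u))) / (1 - Real.exp (-(2 * Real.pi * u)))) - 1 / u) := by
  have hx : (Complex.I * u : ℂ) ∈ Complex.integerComplement := by
    rintro ⟨n, hn⟩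
    have := congrArg Complex.im hn
    simp at this
    exact hu.ne this
  have hs := summable_cotTerm hx
  have he := cot_series_rep' hx
  have hterm : ∀ n : ℕ, cotTerm (Complex.I * u) n
      = -Complex.I * ((2 * u / (u ^ 2 + ((n:ℝ) + 1) ^ 2) : ℝ) : ℂ) := by
    intro n
    rw [cotTerm_identity hx]
    have h1 : ((u:ℂ) ^ 2 + ((n:ℂ) + 1) ^ 2) ≠ 0 := by
      have : (u ^ 2 + ((n:ℝ) + 1) ^ 2) ≠ 0 := by positivity
      exact_mod_cast this
    have h2 : (Complex.I * u + (n + 1)) * (Complex.I * u - (n + 1)) = -((u:ℂ) ^ 2 + ((n:ℂ) + 1) ^ 2) := by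
      linear_combination (u:ℂ)^2 * Complex.I_sq
    push_cast
    rw [h2]
    field_simp
  have hsum : HasSum (fun n => cotTerm (Complex.I * u) n)
      (Real.pi * (Real.pi * (Complex.I * u)).cot - 1 / (Complex.I * u)) := by
    rw [he]; exact hs.hasSum
  have h3 := hsum.mul_left Complex.I
  simp only [hterm] at h3
  have h4 : ∀ n : ℕ, Complex.I * (-Complex.I * ((2 * u / (u ^ 2 + ((n:ℝ) + 1) ^ 2) : ℝ) : ℂ))
     = ((2 * u / (u ^ 2 + ((n:ℝ) + 1) ^ 2) : ℝ) : ℂ) := by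
    intro n
    linear_combination (-((2 * u / (u ^ 2 + ((n:ℝ) + 1) ^ 2) : ℝ) : ℂ)) * Complex.I_sq
  simp only [h4] at h3
  rw [← Complex.hasSum_ofReal]
  suffices hh : Complex.I * (Real.pi * (Real.pi * (Complex.I * u)).cot - 1 / (Complex.I * u)) =
      ((Real.pi * ((1 + Real.exp (-(2 * Real.pi * u))) / (1 - Real.exp (-(2 * Real.pi * u)))) - 1 / u : ℝ) : ℂ) by
    rw [← hh]; exact h3
  rw [Complex.cot_pi_eq_exp_ratio]
  have h5 : 2 * (Real.pi:ℂ) * Complex.I * (Complex.I * u) = ((-(2 * Real.pi * u) : ℝ) : ℂ) := by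
    push_cast; linear_combination 2 * (Real.pi:ℂ) * u * Complex.I_sq
  rw [h5]
  push_cast
  set q := Complex.exp (-(2 * Real.pi * u))
  have hq : (1:ℂ) - q ≠ 0 := by
    have : Real.exp (-(2 * Real.pi * u)) < 1 := by
      rw [Real.exp_lt_one_iff]; have := Real.pi_pos; nlinarith [mul_pos this hu]
    have h6 : (1 - Real.exp (-(2 * Real.pi * u))) ≠ 0 := by linarith
    have : ((1 - Real.exp (-(2 * Real.pi * u)) : ℝ) : ℂ) ≠ 0 := by exact_mod_cast h6
    push_cast at this; exact this
  have hu' : (u:ℂ) ≠ 0 := by exact_mod_cast hu.ne'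
  have hI := Complex.I_ne_zero
  field_simp
  ring_nf
  try simp only [Complex.I_sq]
  try ring

lemma spo_tanh_series (u : ℝ) (hu : 0 < u) :
    HasSum (fun n : ℕ => 4 / Real.pi * (u / (u ^ 2 + (2 * (n:ℝ) + 1) ^ 2)))
      ((1 - Real.exp (-(Real.pi * u))) / (1 + Real.exp (-(Real.pi * u)))) := by
  have h1 := (spo_coth_series u hu).mul_left 2
  have h2 := spo_coth_series (u / 2) (by positivity)
  have hs : Summable (fun n : ℕ => 4 * u / (u ^ 2 + (2 * (n:ℝ) + 1) ^ 2)) := by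
    have := h1.summable.comp_injective (i := fun n : ℕ => 2 * n) (by intro a b; simp)
    refine this.congr fun n => ?_
    simp; ring
  have h3 : HasSum (fun n : ℕ => 4 * u / (u ^ 2 + (2 * (n:ℝ) + 1) ^ 2))
      (Real.pi * ((1 - Real.exp (-(Real.pi * u))) / (1 + Real.exp (-(Real.pi * u))))) := by
    have h4 := HasSum.even_add_odd (f := fun n : ℕ => 2 * (2 * u / (u ^ 2 + ((n:ℝ) + 1) ^ 2)))
      (m := ∑' n : ℕ, 4 * u / (u ^ 2 + (2 * (n:ℝ) + 1) ^ 2)) (m' := _)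
      (by
        refine hs.hasSum.congr_fun ?_ 
        intro n; push_cast; ring) 
      (by
        refine h2.congr_fun ?_
        intro n; push_cast
        have : (u^2 + ((2 * (n:ℝ) + 1) + 1)^2) ≠ 0 := by positivity
        field_simp
        ring)
    have h5 := h4.unique h1
    have h6 : ∑' n : ℕ, 4 * u / (u ^ 2 + (2 * (n:ℝ) + 1) ^ 2) =
      Real.pi * ((1 - Real.exp (-(Real.pi * u))) / (1 + Real.exp (-(Real.pi * u)))) := by
      have e1 : Real.exp (-(2 * Real.pi * u)) = Real.exp (-(Real.pi * u)) ^ 2 := by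
        rw [← Real.exp_nat_mul]; congr 1; push_cast; ring
      have e2 : Real.exp (-(2 * Real.pi * (u/2))) = Real.exp (-(Real.pi * u)) := by
        congr 1; ring
      rw [e1, e2] at h5
      have hq1 : Real.exp (-(Real.pi * u)) < 1 := by
        rw [Real.exp_lt_one_iff]; have := Real.pi_pos; nlinarith [mul_pos this hu]
      have hq0 := Real.exp_pos (-(Real.pi * u))
      set q := Real.exp (-(Real.pi * u))
      have a1 : 1 - q ≠ 0 := by linarith
      have a2 : 1 + q ≠ 0 := by linarith
      have a3 : 1 - q ^ 2 = (1 - q) * (1 + q) := by ring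
      rw [a3] at h5
      rw [eq_sub_iff_add_eq.mpr h5]
      field_simp
      ring
    rw [← h6]; exact hs.hasSum
  have h7 := h3.mul_left (1 / Real.pi)
  have hpi := Real.pi_pos.ne'
  have h8 : 1 / Real.pi * (Real.pi * ((1 - Real.exp (-(Real.pi * u))) / (1 + Real.exp (-(Real.pi * u)))))
      = (1 - Real.exp (-(Real.pi * u))) / (1 + Real.exp (-(Real.pi * u))) := by
    rw [← mul_assoc, one_div_mul_cancel hpi, one_mul]
  rw [h8] at h7
  refine h7.congr_fun fun n => ?_
  field_simp

end

lemma spo_atan_deriv (a u : ℝ) (hu : 0 < u) :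
    HasDerivAt (fun u : ℝ => a * Real.arctan (u / a)) (a ^ 2 / (a ^ 2 + u ^ 2)) u := by
  rcases eq_or_ne a 0 with rfl | ha
  · simpa using hasDerivAt_const u (0:ℝ)
  · have h := (((hasDerivAt_id u).div_const a).arctan).const_mul a
    refine h.congr_deriv ?_
    have : (a ^ 2 + u ^ 2) ≠ 0 := by positivity
    simp only [id]
    field_simp

lemma spo_atan_tendsto (a : ℝ) (ha : 0 ≤ a) :
    Tendsto (fun u : ℝ => a * Real.arctan (u / a)) atTop (𝓝 (a * (Real.pi / 2))) := by
  rcases ha.eq_or_lt with rfl | ha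
  · simp
  · refine Tendsto.const_mul a ?_
    exact (tendsto_nhds_of_tendsto_nhdsWithin Real.tendsto_arctan_atTop).comp
      (tendsto_id.atTop_div_const ha)

lemma spo_atan_cont (a : ℝ) : Continuous (fun u : ℝ => a * Real.arctan (u / a)) := by
  fun_prop

lemma spo_ratint (k a : ℝ) (hk : 0 < k) (ha : 0 ≤ a) :
    IntegrableOn (fun u : ℝ => u / (u ^ 2 + k ^ 2) * (u / (u ^ 2 + a ^ 2))) (Ioi 0) ∧
    ∫ u in Ioi (0:ℝ), u / (u ^ 2 + k ^ 2) * (u / (u ^ 2 + a ^ 2)) = Real.pi / 2 / (k + a) := by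
  have hpos : ∀ u ∈ Ioi (0:ℝ), 0 ≤ u / (u ^ 2 + k ^ 2) * (u / (u ^ 2 + a ^ 2)) := by
    intro u hu
    have : 0 < u := hu
    positivity
  rcases eq_or_ne k a with rfl | hka
  · have hd : ∀ u ∈ Ioi (0:ℝ), HasDerivAt (fun u : ℝ => (1 / 2) * ((1 / k ^ 2) * (k * Real.arctan (u / k)) - u / (u ^ 2 + k ^ 2)))
       (u / (u ^ 2 + k ^ 2) * (u / (u ^ 2 + k ^ 2))) u := by
      intro u hu
      have hu : 0 < u := hu
      have hne : u ^ 2 + k ^ 2 ≠ 0 := by positivity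
      have h1 := (spo_atan_deriv k u hu).const_mul (1 / k ^ 2)
      have h2 := (hasDerivAt_id u).div (((hasDerivAt_id u).pow 2).add_const (k ^ 2)) hne
      refine ((h1.sub h2).const_mul (1 / 2)).congr_deriv ?_
      have hne' : k ^ 2 + u ^ 2 ≠ 0 := by positivity
      simp only [id, Pi.pow_apply]
      field_simp
      ring
    have hc : ContinuousWithinAt (fun u : ℝ => (1 / 2) * ((1 / k ^ 2) * (k * Real.arctan (u / k)) - u / (u ^ 2 + k ^ 2))) (Ici 0) 0 := by
      apply ContinuousAt.continuousWithinAt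
      have : ((0:ℝ) ^ 2 + k ^ 2) ≠ 0 := by positivity
      have := (spo_atan_cont k).continuousAt (x := 0)
      fun_prop (disch := assumption)
    have ht : Tendsto (fun u : ℝ => (1 / 2) * ((1 / k ^ 2) * (k * Real.arctan (u / k)) - u / (u ^ 2 + k ^ 2))) atTop
        (𝓝 ((1/2) * ((1 / k ^ 2) * (k * (Real.pi / 2)) - 0))) := by
      refine Tendsto.const_mul _ (((spo_atan_tendsto k hk.le).const_mul _).sub ?_)
      refine squeeze_zero' (g := fun u : ℝ => u⁻¹) ?_ ?_ tendsto_inv_atTop_zero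
      · filter_upwards [eventually_gt_atTop 0] with u hu
        positivity
      · filter_upwards [eventually_gt_atTop 0] with u hu
        rw [div_le_iff₀ (by positivity), inv_mul_eq_div, le_div_iff₀ hu]
        nlinarith [sq_nonneg k]
    refine ⟨integrableOn_Ioi_deriv_of_nonneg hc hd hpos ht, ?_⟩
    rw [integral_Ioi_of_hasDerivAt_of_nonneg hc hd hpos ht]
    simp
    field_simp
    ring
  · have hka2 : k ^ 2 - a ^ 2 ≠ 0 := by
      intro h
      have : (k - a) * (k + a) = 0 := by linarith
      rcases mul_eq_zero.mp this with h | h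
      · exact hka (by linarith)
      · linarith
    have hd : ∀ u ∈ Ioi (0:ℝ), HasDerivAt (fun u : ℝ => (k * Real.arctan (u / k) - a * Real.arctan (u / a)) / (k ^ 2 - a ^ 2))
       (u / (u ^ 2 + k ^ 2) * (u / (u ^ 2 + a ^ 2))) u := by
      intro u hu
      have hu : 0 < u := hu
      refine (((spo_atan_deriv k u hu).sub (spo_atan_deriv a u hu)).div_const (k ^ 2 - a ^ 2)).congr_deriv ?_
      have hne' : k ^ 2 + u ^ 2 ≠ 0 := by positivity
      have hne1 : u ^ 2 + k ^ 2 ≠ 0 := by positivity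
      have hne2 : a ^ 2 + u ^ 2 ≠ 0 := by positivity
      have hne3 : u ^ 2 + a ^ 2 ≠ 0 := by positivity
      field_simp
      ring
    have hc : ContinuousWithinAt (fun u : ℝ => (k * Real.arctan (u / k) - a * Real.arctan (u / a)) / (k ^ 2 - a ^ 2)) (Ici 0) 0 :=
      (((spo_atan_cont k).sub (spo_atan_cont a)).div_const _).continuousWithinAt
    have ht : Tendsto (fun u : ℝ => (k * Real.arctan (u / k) - a * Real.arctan (u / a)) / (k ^ 2 - a ^ 2)) atTop
        (𝓝 ((k * (Real.pi / 2) - a * (Real.pi / 2)) / (k ^ 2 - a ^ 2))) :=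
      ((spo_atan_tendsto k hk.le).sub (spo_atan_tendsto a ha)).div_const _
    refine ⟨integrableOn_Ioi_deriv_of_nonneg hc hd hpos ht, ?_⟩
    rw [integral_Ioi_of_hasDerivAt_of_nonneg hc hd hpos ht]
    simp
    have : k + a ≠ 0 := by positivity
    field_simp
    ring

lemma spo_telescope (a : ℝ) (ha : 0 ≤ a) :
    HasSum (fun j : ℕ => 2 / (2 * (j:ℝ) + 1 + a) - 2 / (2 * (j:ℝ) + 1 + (a + 2))) (2 / (1 + a)) := by
  have h : Antitone (fun j : ℕ => 2 / (2 * (j:ℝ) + 1 + a)) := by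
    intro i j hij
    have : (i:ℝ) ≤ j := by exact_mod_cast hij
    simp only
    gcongr
  rw [hasSum_iff_tendsto_nat_of_nonneg]
  · have h1 : ∀ n : ℕ, ∑ j ∈ Finset.range n, (2 / (2 * (j:ℝ) + 1 + a) - 2 / (2 * (j:ℝ) + 1 + (a + 2)))
        = 2 / (1 + a) - 2 / (2 * (n:ℝ) + 1 + a) := by
      intro n
      have := Finset.sum_range_sub' (fun j : ℕ => 2 / (2 * (j:ℝ) + 1 + a)) n
      simp only [Nat.cast_zero, mul_zero, zero_add] at this
      rw [← this]
      refine Finset.sum_congr rfl fun j _ => ?_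
      congr 2; push_cast; ring
    simp_rw [h1]
    have : Tendsto (fun n : ℕ => 2 / (2 * (n:ℝ) + 1 + a)) atTop (𝓝 0) := by
      apply Tendsto.const_div_atTop
      apply tendsto_atTop_add_const_right
      apply tendsto_atTop_add_const_right
      exact tendsto_natCast_atTop_atTop.const_mul_atTop two_pos
    simpa using this.const_sub (2 / (1 + a))
  · intro j
    have : 2 / (2 * (j:ℝ) + 1 + (a + 2)) ≤ 2 / (2 * (j:ℝ) + 1 + a) := by
      gcongr; linarith
    linarith

noncomputable def spoW (u : ℝ) : ℝ :=
  (1 - Real.exp (-(Real.pi * u))) / (1 + Real.exp (-(Real.pi * u)))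

lemma spo_D (a : ℝ) (ha : 0 ≤ a) :
    ∫ u in Ioi (0:ℝ), spoW u * (u / (u ^ 2 + a ^ 2) - u / (u ^ 2 + (a + 2) ^ 2)) = 2 / (1 + a) := by
  set F : ℕ → ℝ → ℝ := fun j u => 4 / Real.pi * (u / (u ^ 2 + (2 * (j:ℝ) + 1) ^ 2) * (u / (u ^ 2 + a ^ 2)) -
      u / (u ^ 2 + (2 * (j:ℝ) + 1) ^ 2) * (u / (u ^ 2 + (a + 2) ^ 2))) with hF
  have hI : ∀ j, Integrable (F j) (volume.restrict (Ioi 0)) := by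
    intro j
    have h1 := (spo_ratint (2 * (j:ℝ) + 1) a (by positivity) ha).1
    have h2 := (spo_ratint (2 * (j:ℝ) + 1) (a + 2) (by positivity) (by positivity)).1
    exact (Integrable.sub h1 h2).const_mul _
  have hV : ∀ j, ∫ u in Ioi (0:ℝ), F j u = 2 / (2 * (j:ℝ) + 1 + a) - 2 / (2 * (j:ℝ) + 1 + (a + 2)) := by
    intro j
    obtain ⟨h1, h1'⟩ := spo_ratint (2 * (j:ℝ) + 1) a (by positivity) ha
    obtain ⟨h2, h2'⟩ := spo_ratint (2 * (j:ℝ) + 1) (a + 2) (by positivity) (by positivity)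
    simp only [hF]
    rw [integral_const_mul, integral_sub h1 h2, h1', h2']
    have := Real.pi_pos.ne'
    have e1 : (2 * (j:ℝ) + 1 + a) ≠ 0 := by positivity
    have e2 : (2 * (j:ℝ) + 1 + (a + 2)) ≠ 0 := by positivity
    field_simp
    ring
  have hnn : ∀ j, ∀ u ∈ Ioi (0:ℝ), 0 ≤ F j u := by
    intro j u hu
    have hu : 0 < u := hu
    have : u / (u ^ 2 + (a + 2) ^ 2) ≤ u / (u ^ 2 + a ^ 2) := by
      gcongr; linarith
    have h3 : 0 ≤ u / (u ^ 2 + (2 * (j:ℝ) + 1) ^ 2) := by positivity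
    simp only [hF]
    rw [← mul_sub]
    have := Real.pi_pos
    refine mul_nonneg (by positivity) (mul_nonneg h3 (by linarith))
  have hN : ∀ j, ∫ u in Ioi (0:ℝ), ‖F j u‖ = 2 / (2 * (j:ℝ) + 1 + a) - 2 / (2 * (j:ℝ) + 1 + (a + 2)) := by
    intro j
    rw [← hV j]
    refine setIntegral_congr_fun measurableSet_Ioi fun u hu => ?_
    exact Real.norm_of_nonneg (hnn j u hu)
  have hs := hasSum_integral_of_summable_integral_norm hI (by
    simp_rw [hN]; exact (spo_telescope a ha).summable)
  simp_rw [hV] at hs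
  rw [← hs.unique (spo_telescope a ha)]
  refine setIntegral_congr_fun measurableSet_Ioi fun u hu => ?_
  have h4 := ((spo_tanh_series u hu).mul_right (u / (u ^ 2 + a ^ 2) - u / (u ^ 2 + (a + 2) ^ 2))).tsum_eq
  simp only [spoW]
  rw [← h4]
  refine tsum_congr fun j => ?_
  simp only [hF]; ring

lemma spo_int_dom (u : ℝ) (hu : 0 < u) (g : ℝ → ℝ) (hg : Continuous g) (hb : ∀ t, |g t| ≤ 1) :
    IntegrableOn (fun t => g t * Real.exp (-(u * t))) (Ioi 0) := by
  have h1 : IntegrableOn (fun t : ℝ => Real.exp (-u * t)) (Ioi 0) := exp_neg_integrableOn_Ioi 0 hu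
  refine Integrable.mono' h1 (by fun_prop) (Eventually.of_forall fun t => ?_)
  rw [norm_mul, Real.norm_of_nonneg (Real.exp_pos _).le, Real.norm_eq_abs, neg_mul]
  exact mul_le_of_le_one_left (Real.exp_pos _).le (hb t)

lemma spo_sin_half (u : ℝ) :
    ∫ t in (0:ℝ)..Real.pi, |Real.sin t| * Real.exp (-(u * t)) =
      (1 + Real.exp (-(Real.pi * u))) / (1 + u ^ 2) := by
  have hne : 1 + u ^ 2 ≠ 0 := by positivity
  have h1 : ∫ t in (0:ℝ)..Real.pi, |Real.sin t| * Real.exp (-(u * t)) =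
      ∫ t in (0:ℝ)..Real.pi, Real.sin t * Real.exp (-(u * t)) := by
    refine intervalIntegral.integral_congr fun t ht => ?_
    rw [uIcc_of_le Real.pi_pos.le] at ht
    rw [abs_of_nonneg (Real.sin_nonneg_of_mem_Icc ht)]
  rw [h1]
  have hd : ∀ t ∈ uIcc 0 Real.pi, HasDerivAt
      (fun t => -(Real.exp (-(u * t)) * (u * Real.sin t + Real.cos t)) / (1 + u ^ 2))
      (Real.sin t * Real.exp (-(u * t))) t := by
    intro t _
    have e1 : HasDerivAt (fun t : ℝ => Real.exp (-(u * t))) (Real.exp (-(u * t)) * (-(u * 1))) t :=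
      (((hasDerivAt_id t).const_mul u).neg).exp
    have e2 := ((Real.hasDerivAt_sin t).const_mul u).add (Real.hasDerivAt_cos t)
    refine ((e1.mul e2).neg.div_const (1 + u ^ 2)).congr_deriv ?_
    simp only [Pi.add_apply]
    field_simp
    ring
  rw [intervalIntegral.integral_eq_sub_of_hasDerivAt hd
    (Continuous.intervalIntegrable (by fun_prop) _ _)]
  simp
  field_simp
  ring_nf

lemma spo_abs_sin (u : ℝ) (hu : 0 < u) :
    ∫ t in Ioi (0:ℝ), |Real.sin t| * Real.exp (-(u * t)) =
      (1 + Real.exp (-(Real.pi * u))) / ((1 - Real.exp (-(Real.pi * u))) * (1 + u ^ 2)) := by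
  set g : ℝ → ℝ := fun t => |Real.sin t| * Real.exp (-(u * t)) with hg
  have hI : IntegrableOn g (Ioi 0) :=
    spo_int_dom u hu (fun t => |Real.sin t|) (by fun_prop) (fun t => by rw [abs_abs]; exact Real.abs_sin_le_one t)
  have h1 : ∫ t in Ioi (0:ℝ), g t = (∫ t in (0:ℝ)..Real.pi, g t) + ∫ t in Ioi Real.pi, g t := by
    exact (intervalIntegral.integral_interval_add_Ioi hI
      (hI.mono_set (Ioi_subset_Ioi Real.pi_pos.le))).symm
  have h2 : ∫ t in Ioi Real.pi, g t = Real.exp (-(Real.pi * u)) * ∫ t in Ioi (0:ℝ), g t := by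
    have h3 := (measurePreserving_add_right (volume : Measure ℝ) Real.pi).setIntegral_preimage_emb
      (measurableEmbedding_addRight Real.pi) g (Ioi Real.pi)
    have h4 : (fun x : ℝ => x + Real.pi) ⁻¹' Ioi Real.pi = Ioi 0 := by
      ext x; simp
    rw [h4] at h3
    rw [← h3, ← integral_const_mul]
    congr 1
    ext t
    simp only [hg, Real.sin_add_pi, abs_neg]
    have : Real.exp (-(u * (t + Real.pi))) = Real.exp (-(Real.pi * u)) * Real.exp (-(u * t)) := by
      rw [← Real.exp_add]; congr 1; ring
    rw [this]; ring
  rw [h2, spo_sin_half] at h1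
  have hq1 : Real.exp (-(Real.pi * u)) < 1 := by
    rw [Real.exp_lt_one_iff]; have := Real.pi_pos; nlinarith [mul_pos this hu]
  have a1 : 1 - Real.exp (-(Real.pi * u)) ≠ 0 := by linarith
  have a2 : 1 + u ^ 2 ≠ 0 := by positivity
  rw [eq_div_iff (mul_ne_zero a1 a2)]
  set J := ∫ t in Ioi (0:ℝ), g t
  field_simp at h1
  linear_combination h1

lemma spo_cos_laplace (u a : ℝ) (hu : 0 < u) :
    ∫ t in Ioi (0:ℝ), Real.cos (a * t) * Real.exp (-(u * t)) = u / (u ^ 2 + a ^ 2) := by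
  have hz : ((-u : ℂ) + a * Complex.I).re < 0 := by simpa using hu
  have h1 := integral_exp_mul_complex_Ioi hz 0
  have h2 := integrableOn_exp_mul_complex_Ioi hz 0
  have h3 : ∫ t in Ioi (0:ℝ), Real.cos (a * t) * Real.exp (-(u * t)) =
      ∫ t in Ioi (0:ℝ), RCLike.re (Complex.exp (((-u : ℂ) + a * Complex.I) * t)) := by
    congr 1; ext t
    simp [Complex.exp_re, mul_comm]
  rw [h3, integral_re h2, h1]
  simp [Complex.div_re, Complex.normSq_apply]
  rw [← sq, ← sq]

lemma spo_inner (u s : ℝ) (hu : 0 < u) :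
    ∫ t in Ioi (0:ℝ), Real.sin t * Real.exp (-(u * t)) * Real.sin (s * t) =
      1 / 2 * (u / (u ^ 2 + (s - 1) ^ 2) - u / (u ^ 2 + ((s - 1) + 2) ^ 2)) := by
  have hI1 := spo_int_dom u hu (fun t => Real.cos ((s - 1) * t)) (by fun_prop) (fun t => Real.abs_cos_le_one _)
  have hI2 := spo_int_dom u hu (fun t => Real.cos ((s - 1 + 2) * t)) (by fun_prop) (fun t => Real.abs_cos_le_one _)
  rw [← spo_cos_laplace u _ hu, ← spo_cos_laplace u _ hu, ← integral_sub hI1 hI2, ← integral_const_mul]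
  congr 1; ext t
  have e1 : (s - 1) * t = s * t - t := by ring
  have e2 : (s - 1 + 2) * t = s * t + t := by ring
  rw [e1, e2, Real.cos_sub, Real.cos_add]
  ring

noncomputable def spoF (p : ℝ × ℝ) : ℝ := spoW p.1 * (Real.sin p.2 * Real.exp (-(p.1 * p.2)))

noncomputable def spoM : Measure (ℝ × ℝ) :=
  (volume.restrict (Ioi (0:ℝ))).prod (volume.restrict (Ioi (0:ℝ)))

lemma spoW_cont : Continuous spoW := by
  unfold spoW
  refine Continuous.div (by fun_prop) (by fun_prop) fun u => ?_
  have := Real.exp_pos (-(Real.pi * u)); linarith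

lemma spoF_cont : Continuous spoF := by
  have := spoW_cont
  unfold spoF; fun_prop

lemma spoF_norm_inner (u : ℝ) (hu : 0 < u) :
    ∫ t in Ioi (0:ℝ), ‖spoF (u, t)‖ = (1 + u ^ 2)⁻¹ := by
  have hq1 : Real.exp (-(Real.pi * u)) < 1 := by
    rw [Real.exp_lt_one_iff]; have := Real.pi_pos; nlinarith [mul_pos this hu]
  have hq0 := Real.exp_pos (-(Real.pi * u))
  have hw : 0 ≤ spoW u := by
    unfold spoW
    exact div_nonneg (by linarith) (by linarith)
  have : ∀ t, ‖spoF (u, t)‖ = spoW u * (|Real.sin t| * Real.exp (-(u * t))) := by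
    intro t
    simp only [spoF]
    rw [norm_mul, norm_mul, Real.norm_of_nonneg hw, Real.norm_of_nonneg (Real.exp_pos _).le, Real.norm_eq_abs]
  simp_rw [this]
  rw [integral_const_mul, spo_abs_sin u hu]
  unfold spoW
  have a1 : 1 - Real.exp (-(Real.pi * u)) ≠ 0 := by linarith
  have a3 : 1 + Real.exp (-(Real.pi * u)) ≠ 0 := by linarith
  have a2 : 1 + u ^ 2 ≠ 0 := by positivity
  field_simp

lemma spoF_integrable : Integrable spoF spoM := by
  unfold spoM
  rw [integrable_prod_iff spoF_cont.aestronglyMeasurable]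
  constructor
  · filter_upwards [ae_restrict_mem measurableSet_Ioi] with u hu
    have := (spo_int_dom u hu Real.sin Real.continuous_sin Real.abs_sin_le_one).const_mul (spoW u)
    exact this
  · have h : IntegrableOn (fun u : ℝ => (1 + u ^ 2)⁻¹) (Ioi 0) := integrable_inv_one_add_sq.integrableOn
    refine Integrable.congr h ?_
    filter_upwards [ae_restrict_mem measurableSet_Ioi] with u hu
    exact (spoF_norm_inner u hu).symm

lemma spoF_norm : ∫ p, ‖spoF p‖ ∂spoM = Real.pi / 2 := by
  have h := integral_prod _ spoF_integrable.norm
  unfold spoM at h ⊢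
  rw [h, setIntegral_congr_fun measurableSet_Ioi (fun u hu => spoF_norm_inner u hu), integral_Ioi_inv_one_add_sq]
  simp

lemma spoF_sin_integrable (s : ℝ) : Integrable (fun p => spoF p * Real.sin (s * p.2)) spoM := by
  refine spoF_integrable.mul_bdd (c := 1) (by fun_prop) (Eventually.of_forall fun p => ?_)
  exact Real.abs_sin_le_one _

lemma spoF_sin (s : ℝ) (hs : 1 ≤ |s|) : ∫ p, spoF p * Real.sin (s * p.2) ∂spoM = 1 / s := by
  have key : ∀ s : ℝ, 1 ≤ s → ∫ p, spoF p * Real.sin (s * p.2) ∂spoM = 1 / s := by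
    intro s hs
    have h := integral_prod _ (spoF_sin_integrable s)
    have h2 := spo_D (s - 1) (by linarith)
    unfold spoM at h ⊢
    rw [h]
    have h3 : ∀ u ∈ Ioi (0:ℝ), ∫ t in Ioi (0:ℝ), spoF (u, t) * Real.sin (s * t) =
        1 / 2 * (spoW u * (u / (u ^ 2 + (s - 1) ^ 2) - u / (u ^ 2 + ((s - 1) + 2) ^ 2))) := by
      intro u hu
      simp only [spoF, mul_assoc]
      rw [integral_const_mul]
      have := spo_inner u s hu
      simp only [mul_assoc] at this
      rw [this]; ring
    rw [setIntegral_congr_fun measurableSet_Ioi h3, integral_const_mul, h2]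
    have : s ≠ 0 := by linarith
    have : 1 + (s - 1) ≠ 0 := by simpa
    field_simp
    ring
  rcases le_abs.mp hs with h | h
  · exact key s h
  · have h1 := key (-s) h
    simp only [neg_mul, Real.sin_neg, mul_neg] at h1
    rw [integral_neg] at h1
    rw [one_div, inv_neg] at h1
    rw [one_div]; linarith

lemma spo_partition (S : Set ℝ) (hS : IsCompact S) (ε : ℝ) (hε : 0 < ε) :
    ∃ (ι : Type) (_ : Fintype ι) (l : ι → ℝ) (h : ι → ℝ → ℝ),
      (∀ i, Continuous (h i)) ∧ (∀ i x, 0 ≤ h i x) ∧ (∀ x, ∑ i, h i x ≤ 1) ∧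
      (∀ x ∈ S, ∑ i, h i x = 1) ∧ (∀ i, l i ∈ S) ∧ (∀ i x, h i x ≠ 0 → |l i - x| ≤ ε) := by
  obtain ⟨t, htS, htf, hcov⟩ := hS.finite_cover_balls hε
  haveI : Fintype t := htf.fintype
  obtain ⟨f, hf⟩ := PartitionOfUnity.exists_isSubordinate hS.isClosed
    (fun i : t => Metric.ball (i : ℝ) ε) (fun i => Metric.isOpen_ball) (by
      intro x hx
      obtain ⟨y, hy, hxy⟩ := mem_iUnion₂.mp (hcov hx)
      exact mem_iUnion.mpr ⟨⟨y, hy⟩, hxy⟩)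
  refine ⟨t, inferInstance, fun i => i, fun i x => f i x, fun i => (f i).continuous,
    fun i x => f.nonneg i x, fun x => ?_, fun x hx => ?_, fun i => htS i.2, fun i x hx => ?_⟩
  · have := f.sum_le_one x
    rwa [finsum_eq_sum_of_fintype] at this
  · have := f.sum_eq_one hx
    rwa [finsum_eq_sum_of_fintype] at this
  · have : x ∈ Metric.ball (i : ℝ) ε := hf i (subset_tsupport _ hx)
    rw [abs_sub_comm]
    exact (Metric.mem_ball.mp this).le

section
variable {H : Type*} [NormedAddCommGroup H] [InnerProductSpace ℂ H] [CompleteSpace H]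

lemma spo_norm_sum (B : H →L[ℂ] H) (hB : IsSelfAdjoint B) {ι : Type} [Fintype ι] (k : ι → ℝ → ℝ)
    (hk : ∀ i, Continuous (k i)) (r : ℝ) (hr : 0 ≤ r) (hkr : ∀ x, ∑ i, |k i x| ≤ r) (c : ι → ℂ)
    (hc : ∀ i, ‖c i‖ ≤ 1) : ‖∑ i, c i • cfc (k i) B‖ ≤ r := by
  have h1 : ∑ i, c i • cfc (k i) B = cfc (fun z : ℂ => ∑ i, c i * ((k i z.re : ℝ) : ℂ)) B := by
    have e0 : (fun z : ℂ => ∑ i, c i * ((k i z.re : ℝ) : ℂ))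
        = ∑ i, fun z : ℂ => c i * ((k i z.re : ℝ) : ℂ) := by
      ext z; simp [Finset.sum_apply]
    rw [e0, cfc_sum_univ (fun i => fun z : ℂ => c i * ((k i z.re : ℝ) : ℂ)) B (fun i => by
      have := hk i
      fun_prop)]
    refine Finset.sum_congr rfl fun i _ => ?_
    have := hk i
    rw [cfc_real_eq_complex (k i) hB]
    rw [cfc_const_mul (c i) (fun z : ℂ => ((k i z.re : ℝ) : ℂ)) B (by fun_prop)]
  rw [h1]
  refine norm_cfc_le hr fun z _ => ?_
  refine (norm_sum_le _ _).trans ((Finset.sum_le_sum fun i _ => ?_).trans (hkr z.re))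
  rw [norm_mul, Complex.norm_real, Real.norm_eq_abs]
  exact mul_le_of_le_one_left (abs_nonneg _) (hc i)

lemma spo_sylvester_aux (B C X : H →L[ℂ] H) (hB : IsSelfAdjoint B) (hC : IsSelfAdjoint C)
    (S T : Set ℝ) (hS : IsCompact S) (hT : IsCompact T) (δ : ℝ) (hδ : 0 < δ)
    (hsep : ∀ x ∈ S, ∀ y ∈ T, δ ≤ |x - y|)
    (hX1 : ∀ g : ℝ → ℝ, Continuous g → (∀ x ∈ S, g x = 1) → cfc g B * X = X)
    (hX2 : ∀ g : ℝ → ℝ, Continuous g → (∀ x ∈ T, g x = 1) → X * cfc g C = X)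
    (ε : ℝ) (hε : 0 < ε) :
    ‖X‖ ≤ Real.pi / 2 * ((‖B * X - X * C‖ + 2 * ε * ‖X‖) / δ) := by
  obtain ⟨ι, _, l, h, hhc, hh0, hh1, hhS, hlS, hhl⟩ := spo_partition S hS ε hε
  obtain ⟨κ, _, m, g, hgc, hg0, hg1, hgT, hmT, hgm⟩ := spo_partition T hT ε hε
  set Y := B * X - X * C with hY
  set a : ι → H →L[ℂ] H := fun i => cfc (h i) B with ha
  set b : κ → H →L[ℂ] H := fun j => cfc (g j) C with hb
  -- resolution of X
  have hXs : ∑ i, ∑ j, a i * X * b j = X := by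
    have e1 : (∑ i, a i) * X = X := by
      rw [ha, ← cfc_sum_univ h B (fun i => (hhc i).continuousOn)]
      refine hX1 _ ?_ ?_
      · have : (∑ i, h i) = fun x => ∑ i, h i x := by ext; simp
        rw [this]; exact continuous_finsetSum _ fun i _ => hhc i
      · intro x hx; simpa using hhS x hx
    have e2 : X * (∑ j, b j) = X := by
      rw [hb, ← cfc_sum_univ g C (fun i => (hgc i).continuousOn)]
      refine hX2 _ ?_ ?_
      · have : (∑ i, g i) = fun x => ∑ i, g i x := by ext; simp
        rw [this]; exact continuous_finsetSum _ fun i _ => hgc i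
      · intro x hx; simpa using hgT x hx
    calc ∑ i, ∑ j, a i * X * b j = (∑ i, a i) * X * (∑ j, b j) := by
          rw [Finset.sum_mul, Finset.sum_mul]
          simp_rw [Finset.mul_sum]
      _ = X := by rw [e1, e2]
  -- the approximate conjugates
  set M : ℝ → H →L[ℂ] H := fun t => ∑ i, ∑ j,
    (Complex.exp ((t * l i : ℝ) * Complex.I) * Complex.exp ((-(t * m j) : ℝ) * Complex.I) *
      ((l i - m j : ℝ) : ℂ)) • (a i * X * b j) with hM
  have hMn : ∀ t, ‖M t‖ ≤ ‖Y‖ + 2 * ε * ‖X‖ := by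
    intro t
    set p : ι → ℂ := fun i => Complex.exp ((t * l i : ℝ) * Complex.I) with hp
    set q : κ → ℂ := fun j => Complex.exp ((-(t * m j) : ℝ) * Complex.I) with hq
    have hp1 : ∀ i, ‖p i‖ ≤ 1 := fun i => (Complex.norm_exp_ofReal_mul_I _).le
    have hq1 : ∀ i, ‖q i‖ ≤ 1 := fun i => (Complex.norm_exp_ofReal_mul_I _).le
    set U := ∑ i, p i • a i with hU
    set W := ∑ j, q j • b j with hW
    set R1 := ∑ i, p i • cfc (fun x => h i x * (l i - x)) B with hR1
    set R2 := ∑ j, q j • cfc (fun x => g j x * (m j - x)) C with hR2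
    have nU : ‖U‖ ≤ 1 := by
      refine spo_norm_sum B hB h hhc 1 zero_le_one (fun x => ?_) p hp1
      simp_rw [abs_of_nonneg (hh0 _ _)]; exact hh1 x
    have nW : ‖W‖ ≤ 1 := by
      refine spo_norm_sum C hC g hgc 1 zero_le_one (fun x => ?_) q hq1
      simp_rw [abs_of_nonneg (hg0 _ _)]; exact hg1 x
    have nR1 : ‖R1‖ ≤ ε := by
      refine spo_norm_sum B hB _ (fun i => by have := hhc i; fun_prop) ε hε.le (fun x => ?_) p hp1
      calc ∑ i, |h i x * (l i - x)| ≤ ∑ i, h i x * ε := by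
            refine Finset.sum_le_sum fun i _ => ?_
            rw [abs_mul, abs_of_nonneg (hh0 i x)]
            by_cases h0 : h i x = 0
            · simp [h0]
            · exact mul_le_mul_of_nonneg_left (hhl i x h0) (hh0 i x)
        _ ≤ ε := by
            rw [← Finset.sum_mul]; exact mul_le_of_le_one_left hε.le (hh1 x)
    have nR2 : ‖R2‖ ≤ ε := by
      refine spo_norm_sum C hC _ (fun i => by have := hgc i; fun_prop) ε hε.le (fun x => ?_) q hq1
      calc ∑ i, |g i x * (m i - x)| ≤ ∑ i, g i x * ε := by
            refine Finset.sum_le_sum fun i _ => ?_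
            rw [abs_mul, abs_of_nonneg (hg0 i x)]
            by_cases h0 : g i x = 0
            · simp [h0]
            · exact mul_le_mul_of_nonneg_left (hgm i x h0) (hg0 i x)
        _ ≤ ε := by
            rw [← Finset.sum_mul]; exact mul_le_of_le_one_left hε.le (hg1 x)
    have eR1 : R1 = (∑ i, (p i * (l i : ℂ)) • a i) - U * B := by
      rw [hR1, hU, Finset.sum_mul, ← Finset.sum_sub_distrib]
      refine Finset.sum_congr rfl fun i _ => ?_
      have := hhc i
      have e : cfc (fun x => h i x * (l i - x)) B = (l i : ℂ) • a i - a i * B := by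
        have e1 : cfc (fun x => h i x * (l i - x)) B = cfc (fun x => l i * h i x - h i x * x) B := by
          congr 1; ext x; ring
        rw [e1, cfc_sub (fun x => l i * h i x) (fun x => h i x * x) B (by fun_prop) (by fun_prop),
          cfc_const_mul (l i) (h i) B (by fun_prop), cfc_mul (h i) (fun x => x) B (by fun_prop) (by fun_prop),
          cfc_id' ℝ B]
        rfl
      rw [e, smul_sub, smul_smul, smul_mul_assoc]
    have eR2 : R2 = (∑ j, (q j * (m j : ℂ)) • b j) - C * W := by
      rw [hR2, hW, Finset.mul_sum, ← Finset.sum_sub_distrib]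
      refine Finset.sum_congr rfl fun i _ => ?_
      have := hgc i
      have e : cfc (fun x => g i x * (m i - x)) C = (m i : ℂ) • b i - C * b i := by
        have e1 : cfc (fun x => g i x * (m i - x)) C = cfc (fun x => m i * g i x - x * g i x) C := by
          congr 1; ext x; ring
        rw [e1, cfc_sub (fun x => m i * g i x) (fun x => x * g i x) C (by fun_prop) (by fun_prop),
          cfc_const_mul (m i) (g i) C (by fun_prop), cfc_mul (fun x => x) (g i) C (by fun_prop) (by fun_prop),
          cfc_id' ℝ C]
        rfl
      rw [e, smul_sub, smul_smul, mul_smul_comm]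
    have eM : M t = U * Y * W + R1 * X * W - U * X * R2 := by
      have e1 : M t = (∑ i, (p i * (l i : ℂ)) • a i) * X * W - U * X * (∑ j, (q j * (m j : ℂ)) • b j) := by
        rw [hW, hU]
        simp only [Finset.sum_mul, Finset.mul_sum, smul_mul_assoc, mul_smul_comm, Finset.smul_sum, smul_smul]
        rw [← Finset.sum_sub_distrib]
        simp only [hM]
        rw [Finset.sum_comm]
        refine Finset.sum_congr rfl fun j _ => ?_
        rw [← Finset.sum_sub_distrib]
        refine Finset.sum_congr rfl fun i _ => ?_
        rw [← sub_smul]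
        congr 1
        change p i * q j * ((l i - m j : ℝ) : ℂ) = _
        push_cast
        ring
      rw [e1, eR1, eR2, hY]
      noncomm_ring
    rw [eM]
    have n1 : ‖U * Y * W‖ ≤ ‖Y‖ := by
      calc ‖U * Y * W‖ ≤ ‖U‖ * ‖Y‖ * ‖W‖ := norm_mul₃_le
        _ ≤ 1 * ‖Y‖ * 1 := by gcongr
        _ = ‖Y‖ := by ring
    have n2 : ‖R1 * X * W‖ ≤ ε * ‖X‖ := by
      calc ‖R1 * X * W‖ ≤ ‖R1‖ * ‖X‖ * ‖W‖ := norm_mul₃_le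
        _ ≤ ε * ‖X‖ * 1 := by gcongr
        _ = ε * ‖X‖ := by ring
    have n3 : ‖U * X * R2‖ ≤ ε * ‖X‖ := by
      calc ‖U * X * R2‖ ≤ ‖U‖ * ‖X‖ * ‖R2‖ := norm_mul₃_le
        _ ≤ 1 * ‖X‖ * ε := by gcongr
        _ = ε * ‖X‖ := by ring
    calc ‖U * Y * W + R1 * X * W - U * X * R2‖ ≤ ‖U * Y * W‖ + ‖R1 * X * W‖ + ‖U * X * R2‖ :=
          (norm_sub_le _ _).trans (by gcongr; exact norm_add_le _ _)
      _ ≤ _ := by linarith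
  -- the kernel integral
  set N : ℝ → H →L[ℂ] H := fun t => ∑ i, ∑ j,
    ((Real.sin ((l i - m j) / δ * t) * ((l i - m j) / δ) : ℝ) : ℂ) • (a i * X * b j) with hN
  have hNM : ∀ t, N t = (1 / (2 * Complex.I * δ)) • (M (t / δ) - M (-(t / δ))) := by
    intro t
    simp only [hN, hM]
    rw [← Finset.sum_sub_distrib, Finset.smul_sum]
    refine Finset.sum_congr rfl fun i _ => ?_
    rw [← Finset.sum_sub_distrib, Finset.smul_sum]
    refine Finset.sum_congr rfl fun j _ => ?_
    rw [← sub_smul, smul_smul]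
    congr 1
    rw [← Complex.exp_add, ← Complex.exp_add]
    have hδ' : (δ:ℂ) ≠ 0 := by exact_mod_cast hδ.ne'
    have e1 : ((t / δ * l i : ℝ) * Complex.I + (-(t / δ * m j) : ℝ) * Complex.I)
        = (((l i - m j) / δ * t : ℝ) : ℂ) * Complex.I := by
      push_cast; ring
    have e2 : ((-(t / δ) * l i : ℝ) * Complex.I + (-(-(t / δ) * m j) : ℝ) * Complex.I)
        = -(((l i - m j) / δ * t : ℝ) : ℂ) * Complex.I := by
      push_cast; ring
    rw [e1, e2, Complex.ofReal_mul, Complex.ofReal_sin, Complex.sin]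
    have hI := Complex.I_ne_zero
    set P := Complex.exp ((((l i - m j) / δ * t : ℝ) : ℂ) * Complex.I)
    set Q := Complex.exp (-(((l i - m j) / δ * t : ℝ) : ℂ) * Complex.I)
    push_cast
    field_simp
    linear_combination ((Q - P) * ((l i : ℂ) - m j)) * Complex.I_sq
  have hNn : ∀ t, ‖N t‖ ≤ (‖Y‖ + 2 * ε * ‖X‖) / δ := by
    intro t
    rw [hNM, norm_smul]
    have e1 : ‖(1 / (2 * Complex.I * δ) : ℂ)‖ = 1 / (2 * δ) := by
      simp [abs_of_pos hδ]
    rw [e1]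
    calc 1 / (2 * δ) * ‖M (t / δ) - M (-(t / δ))‖
        ≤ 1 / (2 * δ) * ((‖Y‖ + 2 * ε * ‖X‖) + (‖Y‖ + 2 * ε * ‖X‖)) := by
          gcongr
          exact (norm_sub_le _ _).trans (add_le_add (hMn _) (hMn _))
      _ = _ := by field_simp; ring
  have hXint : ∫ p, (spoF p : ℂ) • N p.2 ∂spoM = X := by
    have e1 : ∀ p : ℝ × ℝ, (spoF p : ℂ) • N p.2 = ∑ i, ∑ j,
        ((spoF p * Real.sin ((l i - m j) / δ * p.2) * ((l i - m j) / δ) : ℝ) : ℂ) • (a i * X * b j) := by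
      intro p
      simp only [hN, Finset.smul_sum, smul_smul]
      refine Finset.sum_congr rfl fun i _ => Finset.sum_congr rfl fun j _ => ?_
      congr 1; push_cast; ring
    have hIij : ∀ i j, Integrable (fun p : ℝ × ℝ =>
        ((spoF p * Real.sin ((l i - m j) / δ * p.2) * ((l i - m j) / δ) : ℝ) : ℂ) • (a i * X * b j)) spoM :=
      fun i j => (((spoF_sin_integrable ((l i - m j) / δ)).mul_const _).ofReal (𝕜 := ℂ)).smul_const _
    simp_rw [e1]
    rw [integral_finsetSum _ fun i _ => integrable_finsetSum _ fun j _ => hIij i j]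
    conv_rhs => rw [← hXs]
    refine Finset.sum_congr rfl fun i _ => ?_
    rw [integral_finsetSum _ fun j _ => hIij i j]
    refine Finset.sum_congr rfl fun j _ => ?_
    have hs : 1 ≤ |(l i - m j) / δ| := by
      rw [abs_div, abs_of_pos hδ, le_div_iff₀ hδ, one_mul]
      exact hsep _ (hlS i) _ (hmT j)
    have hs0 : (l i - m j) / δ ≠ 0 := by
      intro h0; rw [h0] at hs; norm_num at hs
    rw [integral_smul_const, integral_complex_ofReal, integral_mul_const, spoF_sin _ hs, one_div_mul_cancel hs0]
    simp
  calc ‖X‖ = ‖∫ p, (spoF p : ℂ) • N p.2 ∂spoM‖ := by rw [hXint]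
    _ ≤ ∫ p, ‖spoF p‖ * ((‖Y‖ + 2 * ε * ‖X‖) / δ) ∂spoM := by
        refine norm_integral_le_of_norm_le (spoF_integrable.norm.mul_const _) (Eventually.of_forall fun p => ?_)
        rw [norm_smul, Complex.norm_real]
        gcongr
        exact hNn _
    _ = _ := by rw [integral_mul_const, spoF_norm]

lemma spo_sylvester (B C X : H →L[ℂ] H) (hB : IsSelfAdjoint B) (hC : IsSelfAdjoint C)
    (S T : Set ℝ) (hS : IsCompact S) (hT : IsCompact T) (δ : ℝ) (hδ : 0 < δ)
    (hsep : ∀ x ∈ S, ∀ y ∈ T, δ ≤ |x - y|)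
    (hX1 : ∀ g : ℝ → ℝ, Continuous g → (∀ x ∈ S, g x = 1) → cfc g B * X = X)
    (hX2 : ∀ g : ℝ → ℝ, Continuous g → (∀ x ∈ T, g x = 1) → X * cfc g C = X) :
    ‖X‖ ≤ Real.pi / 2 * (‖B * X - X * C‖ / δ) := by
  have h1 : Tendsto (fun ε : ℝ => Real.pi / 2 * ((‖B * X - X * C‖ + 2 * ε * ‖X‖) / δ)) (𝓝[>] 0)
      (𝓝 (Real.pi / 2 * ((‖B * X - X * C‖ + 2 * 0 * ‖X‖) / δ))) := by
    have : Continuous (fun ε : ℝ => Real.pi / 2 * ((‖B * X - X * C‖ + 2 * ε * ‖X‖) / δ)) := by fun_prop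
    exact (this.tendsto 0).mono_left nhdsWithin_le_nhds
  have h2 : ‖X‖ ≤ Real.pi / 2 * ((‖B * X - X * C‖ + 2 * 0 * ‖X‖) / δ) := by
    refine ge_of_tendsto h1 ?_
    filter_upwards [self_mem_nhdsWithin] with ε hε
    exact spo_sylvester_aux B C X hB hC S T hS hT δ hδ hsep hX1 hX2 ε hε
  simpa using h2
end

section
variable {H : Type*} [NormedAddCommGroup H] [InnerProductSpace ℂ H] [CompleteSpace H]

/-- abbreviation for the functional calculus of an indicator -/
noncomputable def spoE (B : H →L[ℂ] H) (s : Set ℝ) : H →L[ℂ] H :=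
  cfc (Set.indicator s (fun _ => (1:ℝ))) B

lemma spo_ind_cont (K s : Set ℝ) (ρ : ℝ) (hρ : 0 < ρ)
    (h : ∀ u ∈ K, u ∈ s → ∀ v ∈ K, v ∉ s → ρ ≤ |u - v|) :
    ContinuousOn (Set.indicator s (fun _ => (1:ℝ))) K := by
  rw [Metric.continuousOn_iff]
  intro b hb ε hε
  refine ⟨ρ, hρ, fun a ha hab => ?_⟩
  rw [Real.dist_eq] at hab
  by_cases h1 : a ∈ s <;> by_cases h2 : b ∈ s
  · simp [h1, h2, hε]
  · exact absurd (h a ha h1 b hb h2) (not_le.mpr hab)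
  · have := h b hb h2 a ha h1
    rw [abs_sub_comm] at this
    exact absurd this (not_le.mpr hab)
  · simp [h1, h2, hε]

lemma spoE_sa (B : H →L[ℂ] H) (s : Set ℝ) : IsSelfAdjoint (spoE B s) := cfc_predicate _ _

lemma spoE_mul_of (B : H →L[ℂ] H) (s : Set ℝ)
    (hs : ContinuousOn (Set.indicator s (fun _ => (1:ℝ))) (spectrum ℝ B)) (g : ℝ → ℝ)
    (hg : ContinuousOn g (spectrum ℝ B)) (h1 : ∀ x ∈ spectrum ℝ B, x ∈ s → g x = 1) :
    cfc g B * spoE B s = spoE B s := by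
  rw [spoE, ← cfc_mul _ _ B hg hs]
  refine cfc_congr fun x hx => ?_
  by_cases hxs : x ∈ s
  · simp [hxs, h1 x hx hxs]
  · simp [hxs]

lemma spoE_mul_of' (B : H →L[ℂ] H) (s : Set ℝ)
    (hs : ContinuousOn (Set.indicator s (fun _ => (1:ℝ))) (spectrum ℝ B)) (g : ℝ → ℝ)
    (hg : ContinuousOn g (spectrum ℝ B)) (h1 : ∀ x ∈ spectrum ℝ B, x ∈ s → g x = 1) :
    spoE B s * cfc g B = spoE B s := by
  rw [spoE, ← cfc_mul _ _ B hs hg]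
  refine cfc_congr fun x hx => ?_
  by_cases hxs : x ∈ s
  · simp [hxs, h1 x hx hxs]
  · simp [hxs]

lemma spoE_idem (B : H →L[ℂ] H) (s : Set ℝ)
    (hs : ContinuousOn (Set.indicator s (fun _ => (1:ℝ))) (spectrum ℝ B)) :
    spoE B s * spoE B s = spoE B s :=
  spoE_mul_of B s hs _ hs fun x _ hx => by simp [hx]

lemma spoE_comm (B : H →L[ℂ] H) (hB : IsSelfAdjoint B) (s : Set ℝ)
    (hs : ContinuousOn (Set.indicator s (fun _ => (1:ℝ))) (spectrum ℝ B)) :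
    B * spoE B s = spoE B s * B := by
  have h : cfc (fun x : ℝ => x) B = B := cfc_id' ℝ B
  have h2 := cfc_mul (fun x : ℝ => x) (Set.indicator s (fun _ => (1:ℝ))) B (by fun_prop) hs
  have h3 := cfc_mul (Set.indicator s (fun _ => (1:ℝ))) (fun x : ℝ => x) B hs (by fun_prop)
  rw [h] at h2 h3
  rw [spoE, ← h2, ← h3]
  congr 1; ext x; ring

lemma spoE_disj (B : H →L[ℂ] H) (s t : Set ℝ)
    (hs : ContinuousOn (Set.indicator s (fun _ => (1:ℝ))) (spectrum ℝ B))
    (ht : ContinuousOn (Set.indicator t (fun _ => (1:ℝ))) (spectrum ℝ B))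
    (hst : ∀ x ∈ spectrum ℝ B, x ∈ s → x ∉ t) :
    spoE B s * spoE B t = 0 := by
  rw [spoE, spoE, ← cfc_mul _ _ B hs ht]
  rw [← cfc_zero (R := ℝ) (a := B)]
  refine cfc_congr fun x hx => ?_
  by_cases hxs : x ∈ s
  · simp [hst x hx hxs]
  · simp [hxs]

lemma spoE_add (B : H →L[ℂ] H) (s t r : Set ℝ)
    (hs : ContinuousOn (Set.indicator s (fun _ => (1:ℝ))) (spectrum ℝ B))
    (ht : ContinuousOn (Set.indicator t (fun _ => (1:ℝ))) (spectrum ℝ B))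
    (hst : ∀ x ∈ spectrum ℝ B, x ∈ s → x ∉ t)
    (hr : ∀ x ∈ spectrum ℝ B, x ∈ r ↔ x ∈ s ∨ x ∈ t) :
    spoE B s + spoE B t = spoE B r := by
  rw [spoE, spoE, ← cfc_add _ _ _ hs ht, spoE]
  refine cfc_congr fun x hx => ?_
  by_cases hxs : x ∈ s <;> by_cases hxt : x ∈ t
  · exact absurd hxt (hst x hx hxs)
  all_goals simp [hxs, hxt, Set.indicator, hr x hx]

lemma spoE_univ (B : H →L[ℂ] H) (hB : IsSelfAdjoint B) (s : Set ℝ)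
    (hs : ∀ x ∈ spectrum ℝ B, x ∈ s) : spoE B s = 1 := by
  rw [spoE, ← cfc_one ℝ B]
  refine cfc_congr fun x hx => ?_
  simp [hs x hx]

lemma spoE_lower (A : H →L[ℂ] H) (hA : IsSelfAdjoint A) (s : Set ℝ)
    (hs : ContinuousOn (Set.indicator s (fun _ => (1:ℝ))) (spectrum ℝ A)) (a σ l : ℝ)
    (h : ∀ u ∈ spectrum ℝ A, u ∈ s → a ≤ σ * (u - l)) (x : H) :
    a * ‖spoE A s x‖ ^ 2 ≤ σ * (inner ℂ (spoE A s x) ((A - (l:ℂ) • 1) (spoE A s x))).re := by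
  have h0 : 0 ≤ cfc (fun u => Set.indicator s (fun _ => (1:ℝ)) u * (σ * (u - l) - a) *
      Set.indicator s (fun _ => (1:ℝ)) u) A := by
    refine cfc_nonneg fun u hu => ?_
    by_cases hus : u ∈ s
    · simp [hus]; linarith [h u hu hus]
    · simp [hus]
  have h1 : cfc (fun u => σ * (u - l) - a) A = (σ:ℂ) • (A - (l:ℂ) • 1) - (a:ℂ) • 1 := by
    rw [cfc_sub (fun u => σ * (u - l)) (fun _ => a) A (by fun_prop) (by fun_prop),
      cfc_const_mul σ (fun u => u - l) A (by fun_prop),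
      cfc_sub (fun u => u) (fun _ => l) A (by fun_prop) (by fun_prop), cfc_id' ℝ A, cfc_const l A,
      cfc_const a A]
    rw [Algebra.algebraMap_eq_smul_one, Algebra.algebraMap_eq_smul_one]
    rfl
  rw [cfc_mul (fun u => Set.indicator s (fun _ => (1:ℝ)) u * (σ * (u - l) - a)) _ A
    (hs.mul (by fun_prop)) hs, cfc_mul _ _ A hs (by fun_prop), h1] at h0
  change 0 ≤ spoE A s * _ * spoE A s at h0
  rw [ContinuousLinearMap.nonneg_iff_isPositive] at h0
  have h2 := h0.re_inner_nonneg_right x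
  have h3 : inner ℂ x ((spoE A s * ((σ:ℂ) • (A - (l:ℂ) • 1) - (a:ℂ) • 1) * spoE A s) x)
     = (σ:ℂ) * inner ℂ (spoE A s x) ((A - (l:ℂ) • 1) (spoE A s x)) - (a:ℂ) * inner ℂ (spoE A s x) (spoE A s x) := by
    have hsym := (spoE_sa A s).isSymmetric
    rw [← inner_smul_right, ← inner_smul_right, ← inner_sub_right]
    exact (hsym x _).symm
  rw [h3] at h2
  rw [inner_self_eq_norm_sq_to_K] at h2
  simp only [map_sub, RCLike.re_to_complex, Complex.re_ofReal_mul] at h2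
  have h5 : (((‖spoE A s x‖ : ℝ) : ℂ) ^ 2).re = ‖spoE A s x‖ ^ 2 := by
    rw [← Complex.ofReal_pow, Complex.ofReal_re]
  erw [h5] at h2
  linarith

lemma spo_quad (δ η d v a b p q r : ℝ) (hδ : 0 ≤ δ) (hd : 0 < d) (hv : 0 ≤ v)
    (hδv : v ^ 2 = δ * (δ + d)) (ha : 0 ≤ a) (hb : 0 ≤ b) 
    (h : ((δ + η) * a ^ 2 ≤ p ∧ (δ + η + d) * b ^ 2 ≤ q) ∨
      ((δ + η + d) * a ^ 2 ≤ p ∧ (δ + η) * b ^ 2 ≤ q)) (hr : |r| ≤ v * a * b) :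
    η * (a ^ 2 + b ^ 2) ≤ p + q - 2 * |r| := by
  have key : ∀ a b : ℝ, 0 ≤ a → 0 ≤ b → 2 * (v * a * b) ≤ δ * a ^ 2 + (δ + d) * b ^ 2 := by
    intro a b ha hb
    have e1 : v = Real.sqrt δ * Real.sqrt (δ + d) := by
      rw [← Real.sqrt_mul hδ, ← hδv, Real.sqrt_sq hv]
    have e2 := Real.sq_sqrt hδ
    have e3 := Real.sq_sqrt (show 0 ≤ δ + d by linarith)
    set y := Real.sqrt δ
    set z := Real.sqrt (δ + d)
    rw [← e3, ← e2, e1]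
    nlinarith [sq_nonneg (y * a - z * b)]
  rcases h with ⟨h1, h2⟩ | ⟨h1, h2⟩
  · nlinarith [key a b ha hb]
  · nlinarith [key b a hb ha]

lemma spo_half (A V : H →L[ℂ] H) (hA : IsSelfAdjoint A)
    (ω Ω : Set ℝ) (hspec : spectrum ℝ A = ω ∪ Ω) (d : ℝ) (hd : 0 < d)
    (hsep : ∀ x ∈ ω, ∀ y ∈ Ω, d ≤ |x - y|)
    (v δ η l σ : ℝ) (hV : ‖V‖ ≤ v) (hδ : 0 ≤ δ) (hδv : v ^ 2 = δ * (δ + d)) (hη : 0 < η)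
    (hσ : σ = 1 ∨ σ = -1)
    (hl : ∀ u ∈ spectrum ℝ A, δ + η ≤ |l - u|)
    (hs : ContinuousOn (Set.indicator (ω ∩ {u | 0 < σ * (u - l)}) (fun _ => (1:ℝ))) (spectrum ℝ A))
    (ht : ContinuousOn (Set.indicator (Ω ∩ {u | 0 < σ * (u - l)}) (fun _ => (1:ℝ))) (spectrum ℝ A))
    (x : H) :
    η * (‖spoE A (ω ∩ {u | 0 < σ * (u - l)}) x‖ ^ 2 + ‖spoE A (Ω ∩ {u | 0 < σ * (u - l)}) x‖ ^ 2) ≤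
     σ * (inner ℂ (spoE A (ω ∩ {u | 0 < σ * (u - l)}) x) ((A - (l:ℂ) • 1)
       (spoE A (ω ∩ {u | 0 < σ * (u - l)}) x))).re +
     σ * (inner ℂ (spoE A (Ω ∩ {u | 0 < σ * (u - l)}) x) ((A - (l:ℂ) • 1)
       (spoE A (Ω ∩ {u | 0 < σ * (u - l)}) x))).re -
     2 * |(inner ℂ (spoE A (ω ∩ {u | 0 < σ * (u - l)}) x) (V
       (spoE A (Ω ∩ {u | 0 < σ * (u - l)}) x))).re| := by
  have hv : 0 ≤ v := (norm_nonneg V).trans hV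
  refine spo_quad δ η d v _ _ _ _ _ hδ hd hv hδv (norm_nonneg _) (norm_nonneg _) ?_ ?_
  · have hl' : ∀ u ∈ spectrum ℝ A, 0 < σ * (u - l) → δ + η ≤ σ * (u - l) := by
      intro u hu h0
      have := hl u hu
      rcases hσ with rfl | rfl
      · rw [abs_of_neg (by linarith)] at this; linarith
      · rw [abs_of_pos (by linarith)] at this; linarith
    by_cases hc : ∀ u ∈ Ω, 0 < σ * (u - l) → δ + η + d ≤ σ * (u - l)
    · left
      exact ⟨spoE_lower A hA _ hs _ _ _ (fun u hu hus => hl' u hu hus.2) x,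
        spoE_lower A hA _ ht _ _ _ (fun u hu hus => hc u hus.1 hus.2) x⟩
    · right
      refine ⟨spoE_lower A hA _ hs _ _ _ (fun u hu hus => ?_) x,
        spoE_lower A hA _ ht _ _ _ (fun u hu hus => hl' u hu hus.2) x⟩
      push Not at hc
      obtain ⟨w, hw, hw0, hw1⟩ := hc
      have h1 := hl' u hu hus.2
      have h2 := hl' w (hspec ▸ Or.inr hw) hw0
      have h3 : d ≤ |σ * (u - l) - σ * (w - l)| := by
        have : σ * (u - l) - σ * (w - l) = σ * (u - w) := by ring
        rw [this, abs_mul]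
        have : |σ| = 1 := by rcases hσ with rfl | rfl <;> simp
        rw [this, one_mul]
        exact hsep u hus.1 w hw
      rcases le_abs.mp h3 with h3 | h3 <;> linarith
  · refine (Complex.abs_re_le_norm _).trans ((norm_inner_le_norm _ _).trans ?_)
    calc _ ≤ ‖spoE A (ω ∩ {u | 0 < σ * (u - l)}) x‖ * (v * ‖spoE A (Ω ∩ {u | 0 < σ * (u - l)}) x‖) := by
          gcongr
          exact (V.le_opNorm _).trans (by gcongr)
      _ = _ := by ring

lemma spoE_orth (A : H →L[ℂ] H) (s t : Set ℝ)
    (hs : ContinuousOn (Set.indicator s (fun _ => (1:ℝ))) (spectrum ℝ A))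
    (ht : ContinuousOn (Set.indicator t (fun _ => (1:ℝ))) (spectrum ℝ A))
    (hst : ∀ x ∈ spectrum ℝ A, x ∈ s → x ∉ t) (x y : H) :
    inner ℂ (spoE A s x) (spoE A t y) = 0 := by
  have h1 : inner ℂ (spoE A s x) (spoE A t y) = inner ℂ x ((spoE A s * spoE A t) y) :=
    (spoE_sa A s).isSymmetric x _
  rw [h1, spoE_disj A s t hs ht hst]
  simp

lemma spoE_orth_D (A : H →L[ℂ] H) (hA : IsSelfAdjoint A) (l : ℝ) (s t : Set ℝ)
    (hs : ContinuousOn (Set.indicator s (fun _ => (1:ℝ))) (spectrum ℝ A))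
    (ht : ContinuousOn (Set.indicator t (fun _ => (1:ℝ))) (spectrum ℝ A))
    (hst : ∀ x ∈ spectrum ℝ A, x ∈ s → x ∉ t) (x y : H) :
    inner ℂ (spoE A s x) ((A - (l:ℂ) • 1) (spoE A t y)) = 0 := by
  have h1 : (A - (l:ℂ) • 1) (spoE A t y) = spoE A t ((A - (l:ℂ) • 1) y) := by
    change ((A - (l:ℂ) • 1) * spoE A t) y = (spoE A t * (A - (l:ℂ) • 1)) y
    rw [sub_mul, mul_sub, spoE_comm A hA t ht]
    simp
  rw [h1, spoE_orth A s t hs ht hst]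

lemma spo_off (P V : H →L[ℂ] H) (hP : IsSelfAdjoint P) (h : P * V * P = 0) (x y : H)
    (hx : P x = x) (hy : P y = y) : inner ℂ x (V y) = 0 := by
  have h1 : inner ℂ (P x) (V (P y)) = inner ℂ x ((P * V * P) y) := hP.isSymmetric x _
  rw [h] at h1
  rw [hx, hy] at h1
  simpa using h1

lemma spo_enclosure (A V : H →L[ℂ] H) (hA : IsSelfAdjoint A) (hVs : IsSelfAdjoint V)
    (ω Ω : Set ℝ) (hspec : spectrum ℝ A = ω ∪ Ω) (d : ℝ) (hd : 0 < d)
    (hsep : ∀ x ∈ ω, ∀ y ∈ Ω, d ≤ |x - y|)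
    (hoff1 : spoE A ω * V * spoE A ω = 0) (hoff2 : (1 - spoE A ω) * V * (1 - spoE A ω) = 0)
    (v δ η l : ℝ) (hV : ‖V‖ ≤ v) (hδ : 0 ≤ δ) (hδv : v ^ 2 = δ * (δ + d)) (hη : 0 < η)
    (hl : ∀ u ∈ spectrum ℝ A, δ + η ≤ |l - u|) :
    l ∉ spectrum ℝ (A + V) := by
  set K := spectrum ℝ A with hK
  have hdisj : ∀ u ∈ ω, u ∉ Ω := fun u h1 h2 => by
    have := hsep u h1 u h2
    simp at this; linarith
  have habs : ∀ σ : ℝ, (σ = 1 ∨ σ = -1) → ∀ u ∈ K, 0 < σ * (u - l) → η ≤ σ * (u - l) := by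
    intro σ hσ u hu h0
    have := hl u hu
    rcases hσ with rfl | rfl
    · rw [abs_of_neg (by linarith)] at this; linarith
    · rw [abs_of_pos (by linarith)] at this; linarith
  have hcω : ∀ σ : ℝ, (σ = 1 ∨ σ = -1) →
      ContinuousOn (Set.indicator (ω ∩ {u | 0 < σ * (u - l)}) (fun _ => (1:ℝ))) K := by
    intro σ hσ
    refine spo_ind_cont _ _ (min d η) (lt_min hd hη) ?_
    rintro u hu ⟨hu1, hu2⟩ w hw hw'
    rw [hspec] at hw
    rcases hw with hw | hw
    · refine (min_le_right _ _).trans ?_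
      have h2 : ¬ (0 < σ * (w - l)) := fun h => hw' ⟨hw, h⟩
      have h1 := habs σ hσ u hu hu2
      rcases hσ with rfl | rfl
      · refine le_abs.mpr (Or.inl ?_); linarith
      · refine le_abs.mpr (Or.inr ?_); linarith
    · exact (min_le_left _ _).trans (hsep u hu1 w hw)
  have hcΩ : ∀ σ : ℝ, (σ = 1 ∨ σ = -1) →
      ContinuousOn (Set.indicator (Ω ∩ {u | 0 < σ * (u - l)}) (fun _ => (1:ℝ))) K := by
    intro σ hσ
    refine spo_ind_cont _ _ (min d η) (lt_min hd hη) ?_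
    rintro u hu ⟨hu1, hu2⟩ w hw hw'
    rw [hspec] at hw
    rcases hw with hw | hw
    · rw [abs_sub_comm]; exact (min_le_left _ _).trans (hsep w hw u hu1)
    · refine (min_le_right _ _).trans ?_
      have h2 : ¬ (0 < σ * (w - l)) := fun h => hw' ⟨hw, h⟩
      have h1 := habs σ hσ u hu hu2
      rcases hσ with rfl | rfl
      · refine le_abs.mpr (Or.inl ?_); linarith
      · refine le_abs.mpr (Or.inr ?_); linarith
  have hne : ∀ u ∈ K, u ≠ l := fun u hu h => by
    have := hl u hu
    rw [h] at this; simp at this; linarith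
  have c1 := hcω 1 (Or.inl rfl)
  have c2 := hcΩ 1 (Or.inl rfl)
  have c3 := hcω (-1) (Or.inr rfl)
  have c4 := hcΩ (-1) (Or.inr rfl)
  have hh1 := spo_half A V hA ω Ω hspec d hd hsep v δ η l 1 hV hδ hδv hη (Or.inl rfl) hl c1 c2
  have hh2 := spo_half A V hA ω Ω hspec d hd hsep v δ η l (-1) hV hδ hδv hη (Or.inr rfl) hl c3 c4
  set s1 := ω ∩ {u | 0 < (1:ℝ) * (u - l)} with hs1
  set s2 := Ω ∩ {u | 0 < (1:ℝ) * (u - l)} with hs2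
  set s3 := ω ∩ {u | 0 < (-1:ℝ) * (u - l)} with hs3
  set s4 := Ω ∩ {u | 0 < (-1:ℝ) * (u - l)} with hs4
  have hsgn : ∀ u : ℝ, 0 < (1:ℝ) * (u - l) → ¬ (0 < (-1:ℝ) * (u - l)) := fun u h h' => by linarith
  have d12 : ∀ u ∈ K, u ∈ s1 → u ∉ s2 := fun u _ h h' => hdisj u h.1 h'.1
  have d13 : ∀ u ∈ K, u ∈ s1 → u ∉ s3 := fun u _ h h' => hsgn u h.2 h'.2
  have d14 : ∀ u ∈ K, u ∈ s1 → u ∉ s4 := fun u _ h h' => hdisj u h.1 h'.1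
  have d23 : ∀ u ∈ K, u ∈ s2 → u ∉ s3 := fun u _ h h' => hdisj u h'.1 h.1
  have d24 : ∀ u ∈ K, u ∈ s2 → u ∉ s4 := fun u _ h h' => hsgn u h.2 h'.2
  have d34 : ∀ u ∈ K, u ∈ s3 → u ∉ s4 := fun u _ h h' => hdisj u h.1 h'.1
  have hsg : ∀ u ∈ K, 0 < (1:ℝ) * (u - l) ∨ 0 < (-1:ℝ) * (u - l) := by
    intro u hu
    rcases lt_or_gt_of_ne (hne u hu) with h | h
    · right; linarith
    · left; linarith
  have cω : ContinuousOn (Set.indicator ω (fun _ => (1:ℝ))) K := by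
    refine spo_ind_cont _ _ d hd fun u _ hu w hw hw' => hsep u hu w ?_
    rw [hspec] at hw; exact hw.resolve_left hw'
  have cΩ : ContinuousOn (Set.indicator Ω (fun _ => (1:ℝ))) K := by
    refine spo_ind_cont _ _ d hd fun u _ hu w hw hw' => ?_
    rw [abs_sub_comm]
    rw [hspec] at hw; exact hsep w (hw.resolve_right hw') u hu
  have e13 : spoE A s1 + spoE A s3 = spoE A ω := by
    refine spoE_add A _ _ _ c1 c3 d13 fun u hu => ⟨fun h => ?_, fun h => ?_⟩
    · exact (hsg u hu).imp (fun h' => ⟨h, h'⟩) (fun h' => ⟨h, h'⟩)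
    · exact h.elim (fun h => h.1) (fun h => h.1)
  have e24 : spoE A s2 + spoE A s4 = spoE A Ω := by
    refine spoE_add A _ _ _ c2 c4 d24 fun u hu => ⟨fun h => ?_, fun h => ?_⟩
    · exact (hsg u hu).imp (fun h' => ⟨h, h'⟩) (fun h' => ⟨h, h'⟩)
    · exact h.elim (fun h => h.1) (fun h => h.1)
  have eall : spoE A ω + spoE A Ω = 1 := by
    rw [spoE_add A ω Ω (ω ∪ Ω) cω cΩ (fun u _ => hdisj u) (fun u _ => Iff.rfl)]
    exact spoE_univ A hA _ (fun u hu => hspec ▸ hu)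
  have eΩ : 1 - spoE A ω = spoE A Ω := by rw [← eall]; abel
  rw [eΩ] at hoff2
  set J : H →L[ℂ] H := spoE A s1 + spoE A s2 - spoE A s3 - spoE A s4 with hJ
  have hJJ : J * J = 1 := by
    have t12 := spoE_disj A _ _ c1 c2 d12
    have t13 := spoE_disj A _ _ c1 c3 d13
    have t14 := spoE_disj A _ _ c1 c4 d14
    have t23 := spoE_disj A _ _ c2 c3 d23
    have t24 := spoE_disj A _ _ c2 c4 d24
    have t34 := spoE_disj A _ _ c3 c4 d34
    have t21 := spoE_disj A _ _ c2 c1 (fun u hu h h' => d12 u hu h' h)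
    have t31 := spoE_disj A _ _ c3 c1 (fun u hu h h' => d13 u hu h' h)
    have t41 := spoE_disj A _ _ c4 c1 (fun u hu h h' => d14 u hu h' h)
    have t32 := spoE_disj A _ _ c3 c2 (fun u hu h h' => d23 u hu h' h)
    have t42 := spoE_disj A _ _ c4 c2 (fun u hu h h' => d24 u hu h' h)
    have t43 := spoE_disj A _ _ c4 c3 (fun u hu h h' => d34 u hu h' h)
    have t1 := spoE_idem A _ c1
    have t2 := spoE_idem A _ c2
    have t3 := spoE_idem A _ c3
    have t4 := spoE_idem A _ c4
    rw [hJ]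
    simp only [sub_mul, mul_sub, add_mul, mul_add, t12, t13, t14, t23, t24, t34, t21, t31, t41, t32, t42, t43,
      t1, t2, t3, t4]
    rw [← eall, ← e13, ← e24]
    abel
  have hJs : IsSelfAdjoint J :=
    (((spoE_sa A s1).add (spoE_sa A s2)).sub (spoE_sa A s3)).sub (spoE_sa A s4)
  set T : H →L[ℂ] H := (A - (l:ℂ) • 1) + V with hT
  have hU : IsUnit (J * T) := by
    refine ContinuousLinearMap.isUnit_of_forall_le_norm_inner_map (c := ⟨η, hη.le⟩) _ hη fun x => ?_
    have hx : x = spoE A s1 x + spoE A s2 x + spoE A s3 x + spoE A s4 x := by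
      have : (spoE A ω + spoE A Ω) x = x := by rw [eall]; rfl
      rw [← e13, ← e24] at this
      conv_lhs => rw [← this]
      simp only [add_apply]
      abel
    have g1 := hh1 x
    have g2 := hh2 x
    have hPx : ∀ t, t ⊆ ω → ContinuousOn (Set.indicator t (fun _ => (1:ℝ))) K →
        spoE A ω (spoE A t x) = spoE A t x := by
      intro t ht hct
      change (spoE A ω * spoE A t) x = _
      rw [show spoE A ω * spoE A t = spoE A t from spoE_mul_of A t hct _ cω fun u _ hu => by simp [ht hu]]
    have hQx : ∀ t, t ⊆ Ω → ContinuousOn (Set.indicator t (fun _ => (1:ℝ))) K →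
        spoE A Ω (spoE A t x) = spoE A t x := by
      intro t ht hct
      change (spoE A Ω * spoE A t) x = _
      rw [show spoE A Ω * spoE A t = spoE A t from spoE_mul_of A t hct _ cΩ fun u _ hu => by simp [ht hu]]
    have p1 := hPx s1 inter_subset_left c1
    have p3 := hPx s3 inter_subset_left c3
    have p2 := hQx s2 inter_subset_left c2
    have p4 := hQx s4 inter_subset_left c4
    have v11 := spo_off _ V (spoE_sa A ω) hoff1 _ _ p1 p1
    have v13 := spo_off _ V (spoE_sa A ω) hoff1 _ _ p1 p3
    have v31 := spo_off _ V (spoE_sa A ω) hoff1 _ _ p3 p1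
    have v33 := spo_off _ V (spoE_sa A ω) hoff1 _ _ p3 p3
    have v22 := spo_off _ V (spoE_sa A Ω) hoff2 _ _ p2 p2
    have v24 := spo_off _ V (spoE_sa A Ω) hoff2 _ _ p2 p4
    have v42 := spo_off _ V (spoE_sa A Ω) hoff2 _ _ p4 p2
    have v44 := spo_off _ V (spoE_sa A Ω) hoff2 _ _ p4 p4
    have hsymm : ∀ y z : H, (inner ℂ y (V z)).re = (inner ℂ z (V y)).re := by
      intro y z
      rw [← inner_conj_symm, Complex.conj_re]
      exact congrArg Complex.re (hVs.isSymmetric z y)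
    have w21 := hsymm (spoE A s2 x) (spoE A s1 x)
    have w41 := hsymm (spoE A s4 x) (spoE A s1 x)
    have w32 := hsymm (spoE A s3 x) (spoE A s2 x)
    have w43 := hsymm (spoE A s4 x) (spoE A s3 x)
    have o12 := spoE_orth_D A hA l _ _ c1 c2 d12 x x
    have o13 := spoE_orth_D A hA l _ _ c1 c3 d13 x x
    have o14 := spoE_orth_D A hA l _ _ c1 c4 d14 x x
    have o23 := spoE_orth_D A hA l _ _ c2 c3 d23 x x
    have o24 := spoE_orth_D A hA l _ _ c2 c4 d24 x x
    have o34 := spoE_orth_D A hA l _ _ c3 c4 d34 x x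
    have o21 := spoE_orth_D A hA l _ _ c2 c1 (fun u hu h h' => d12 u hu h' h) x x
    have o31 := spoE_orth_D A hA l _ _ c3 c1 (fun u hu h h' => d13 u hu h' h) x x
    have o41 := spoE_orth_D A hA l _ _ c4 c1 (fun u hu h h' => d14 u hu h' h) x x
    have o32 := spoE_orth_D A hA l _ _ c3 c2 (fun u hu h h' => d23 u hu h' h) x x
    have o42 := spoE_orth_D A hA l _ _ c4 c2 (fun u hu h h' => d24 u hu h' h) x x
    have o43 := spoE_orth_D A hA l _ _ c4 c3 (fun u hu h h' => d34 u hu h' h) x x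
    have i12 := spoE_orth A _ _ c1 c2 d12 x x
    have i13 := spoE_orth A _ _ c1 c3 d13 x x
    have i14 := spoE_orth A _ _ c1 c4 d14 x x
    have i23 := spoE_orth A _ _ c2 c3 d23 x x
    have i24 := spoE_orth A _ _ c2 c4 d24 x x
    have i34 := spoE_orth A _ _ c3 c4 d34 x x
    have i21 := spoE_orth A _ _ c2 c1 (fun u hu h h' => d12 u hu h' h) x x
    have i31 := spoE_orth A _ _ c3 c1 (fun u hu h h' => d13 u hu h' h) x x
    have i41 := spoE_orth A _ _ c4 c1 (fun u hu h h' => d14 u hu h' h) x x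
    have i32 := spoE_orth A _ _ c3 c2 (fun u hu h h' => d23 u hu h' h) x x
    have i42 := spoE_orth A _ _ c4 c2 (fun u hu h h' => d24 u hu h' h) x x
    have i43 := spoE_orth A _ _ c4 c3 (fun u hu h h' => d34 u hu h' h) x x
    have hnorm : ‖x‖ ^ 2 = ‖spoE A s1 x‖ ^ 2 + ‖spoE A s2 x‖ ^ 2 + ‖spoE A s3 x‖ ^ 2 + ‖spoE A s4 x‖ ^ 2 := by
      have : ∀ z : H, ‖z‖ ^ 2 = (inner ℂ z z).re := fun z => (inner_self_eq_norm_sq (𝕜 := ℂ) z).symm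
      simp only [this]
      conv_lhs => rw [hx]
      simp only [inner_add_left, inner_add_right, i12, i13, i14, i23, i24, i34, i21, i31, i41, i32, i42, i43,
        Complex.add_re, Complex.zero_re]
      ring
    have hmain : (inner ℂ (J x) (T x)).re =
        (inner ℂ (spoE A s1 x) ((A - (l:ℂ) • 1) (spoE A s1 x))).re
        + (inner ℂ (spoE A s2 x) ((A - (l:ℂ) • 1) (spoE A s2 x))).re
        - (inner ℂ (spoE A s3 x) ((A - (l:ℂ) • 1) (spoE A s3 x))).re
        - (inner ℂ (spoE A s4 x) ((A - (l:ℂ) • 1) (spoE A s4 x))).re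
        + 2 * (inner ℂ (spoE A s1 x) (V (spoE A s2 x))).re
        - 2 * (inner ℂ (spoE A s3 x) (V (spoE A s4 x))).re := by
      have hJx : J x = spoE A s1 x + spoE A s2 x - spoE A s3 x - spoE A s4 x := rfl
      have hTx : T x = (A - (l:ℂ) • 1) x + V x := rfl
      rw [hJx, hTx]
      have hDx := congrArg (⇑(A - (l:ℂ) • (1 : H →L[ℂ] H))) hx
      have hVx := congrArg (⇑V) hx
      rw [hDx, hVx]
      clear_value T J
      generalize A - (l:ℂ) • (1 : H →L[ℂ] H) = D at *
      simp only [map_add, inner_add_left, inner_add_right, inner_sub_left, o12, o13, o14, o23, o24, o34, o21,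
        o31, o41, o32, o42, o43, v11, v13, v31, v33, v22, v24, v42, v44,
        Complex.add_re, Complex.sub_re, Complex.zero_re, w21, w41, w32, w43]
      ring
    have hfin : ‖x‖ ^ 2 * η ≤ (inner ℂ (J x) (T x)).re := by
      rw [hmain, hnorm]
      have a1 := neg_abs_le (inner ℂ (spoE A s1 x) (V (spoE A s2 x))).re
      have a2 := le_abs_self (inner ℂ (spoE A s3 x) (V (spoE A s4 x))).re
      linarith
    have hin : inner ℂ ((J * T) x) x = inner ℂ (T x) (J x) := hJs.isSymmetric _ _
    change ‖x‖ ^ 2 * η ≤ _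
    rw [hin, ← inner_conj_symm, RCLike.norm_conj]
    exact hfin.trans (Complex.re_le_norm _)
  have hTU : IsUnit T := by
    have h1 : T = J * (J * T) := by rw [← mul_assoc, hJJ, one_mul]
    rw [h1]
    exact (show IsUnit J from ⟨⟨J, J, hJJ, hJJ⟩, rfl⟩).mul hU
  rw [spectrum.notMem_iff]
  have : (algebraMap ℝ (H →L[ℂ] H)) l - (A + V) = - T := by
    rw [hT, Algebra.algebraMap_eq_smul_one]
    have : (l:ℂ) • (1 : H →L[ℂ] H) = l • 1 := rfl
    rw [this]; abel
  rw [this]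
  exact hTU.neg
end

section
variable {H : Type*} [NormedAddCommGroup H] [InnerProductSpace ℂ H] [CompleteSpace H]

lemma spo_near (A V : H →L[ℂ] H) (hA : IsSelfAdjoint A) (hVs : IsSelfAdjoint V)
    (ω Ω : Set ℝ) (hω : ω.Nonempty) (hspec : spectrum ℝ A = ω ∪ Ω) (d : ℝ) (hd : 0 < d)
    (hsep : ∀ x ∈ ω, ∀ y ∈ Ω, d ≤ |x - y|)
    (hoff1 : spoE A ω * V * spoE A ω = 0) (hoff2 : (1 - spoE A ω) * V * (1 - spoE A ω) = 0)
    (v δ : ℝ) (hV : ‖V‖ ≤ v) (hδ : 0 ≤ δ) (hδv : v ^ 2 = δ * (δ + d))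
    (x : ℝ) (hx : x ∈ spectrum ℝ (A + V)) : ∃ y ∈ ω ∪ Ω, |x - y| ≤ δ := by
  have hK : IsCompact (ω ∪ Ω) := hspec ▸ spectrum.isCompact A
  obtain ⟨y, hy, hxy⟩ := hK.exists_infDist_eq_dist hω.inl x
  refine ⟨y, hy, ?_⟩
  by_contra hcon
  push Not at hcon
  refine spo_enclosure A V hA hVs ω Ω hspec d hd hsep hoff1 hoff2 v δ (|x - y| - δ) x hV hδ hδv
    (by linarith) (fun u hu => ?_) hx
  have : Metric.infDist x (ω ∪ Ω) ≤ dist x u := Metric.infDist_le_dist_of_mem (hspec ▸ hu)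
  rw [hxy, Real.dist_eq, Real.dist_eq] at this
  linarith

lemma spo_proj_le (P Q : H →L[ℂ] H) (hP : IsSelfAdjoint P) (hQ : IsSelfAdjoint Q)
    (hPi : P * P = P) (hQi : Q * Q = Q) (r : ℝ) 
    (h1 : ‖(1 - P) * Q‖ ≤ r) (h2 : ‖(1 - Q) * P‖ ≤ r) : ‖P - Q‖ ≤ r := by
  have hr : 0 ≤ r := (norm_nonneg _).trans h1
  have pyth : ∀ (R : H →L[ℂ] H), IsSelfAdjoint R → R * R = R → ∀ y z : H,
      ‖R y + (1 - R) z‖ ^ 2 = ‖R y‖ ^ 2 + ‖(1 - R) z‖ ^ 2 := by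
    intro R hR hRi y z
    have h0 : inner ℂ (R y) ((1 - R) z) = 0 := by
      have e : inner ℂ (R y) ((1 - R) z) = inner ℂ y ((R * (1 - R)) z) := hR.isSymmetric y _
      rw [e, mul_sub, hRi, mul_one, sub_self]; simp
    have := norm_add_sq_eq_norm_sq_add_norm_sq_of_inner_eq_zero (𝕜 := ℂ) _ _ h0
    simpa [pow_two] using this
  have h3 : ‖P * (1 - Q)‖ ≤ r := by
    have : star ((1 - Q) * P) = P * (1 - Q) := by
      rw [star_mul, hP.star_eq, star_sub, star_one, hQ.star_eq]
    rw [← this, norm_star]; exact h2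
  refine ContinuousLinearMap.opNorm_le_bound _ hr fun x => ?_
  refine (sq_le_sq₀ (norm_nonneg _) (by positivity)).mp ?_
  have e1 : (P - Q) x = P ((1 - Q) x) + (1 - P) (-(Q x)) := by
    simp; abel
  have e2 : P ((1 - Q) x) = (P * (1 - Q)) ((1 - Q) x) := by
    change (P * (1 - Q)) x = (P * (1 - Q) * (1 - Q)) x
    congr 1
    rw [mul_assoc, mul_sub (1 - Q), sub_mul 1 Q Q, hQi]; simp
  have e3 : (1 - P) (-(Q x)) = -(((1 - P) * Q) (Q x)) := by
    change (1 - P) (-(Q x)) = -((1 - P) * Q * Q) x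
    rw [mul_assoc, hQi]; simp; abel
  have e4 : ‖x‖ ^ 2 = ‖Q x‖ ^ 2 + ‖(1 - Q) x‖ ^ 2 := by
    rw [← pyth Q hQ hQi]; simp
  rw [e1, pyth P hP hPi, e2, e3, norm_neg, mul_pow, e4]
  have n1 : ‖(P * (1 - Q)) ((1 - Q) x)‖ ≤ r * ‖(1 - Q) x‖ :=
    (ContinuousLinearMap.le_opNorm _ _).trans (by gcongr)
  have n2 : ‖((1 - P) * Q) (Q x)‖ ≤ r * ‖Q x‖ :=
    (ContinuousLinearMap.le_opNorm _ _).trans (by gcongr)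
  have m1 := pow_le_pow_left₀ (norm_nonneg _) n1 2
  have m2 := pow_le_pow_left₀ (norm_nonneg _) n2 2
  nlinarith

lemma spoE_norm_le (B : H →L[ℂ] H) (s : Set ℝ) : ‖spoE B s‖ ≤ 1 := by
  refine norm_cfc_le zero_le_one fun x _ => ?_
  by_cases h : x ∈ s <;> simp [h]

lemma spo_compact (B : H →L[ℂ] H) (s : Set ℝ)
    (hs : ContinuousOn (Set.indicator s (fun _ => (1:ℝ))) (spectrum ℝ B)) :
    IsCompact (spectrum ℝ B ∩ s) := by
  have hK : IsCompact (spectrum ℝ B) := spectrum.isCompact B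
  have h1 : IsClosed (spectrum ℝ B ∩ (Set.indicator s (fun _ => (1:ℝ))) ⁻¹' {1}) :=
    hs.preimage_isClosed_of_isClosed hK.isClosed isClosed_singleton
  have h2 : spectrum ℝ B ∩ (Set.indicator s (fun _ => (1:ℝ))) ⁻¹' {1} = spectrum ℝ B ∩ s := by
    ext x
    by_cases h : x ∈ s <;> simp [h]
  rw [h2] at h1
  exact hK.of_isClosed_subset h1 inter_subset_left

lemma spo_block (B C : H →L[ℂ] H) (hB : IsSelfAdjoint B) (hC : IsSelfAdjoint C) (s t : Set ℝ)
    (hs : ContinuousOn (Set.indicator s (fun _ => (1:ℝ))) (spectrum ℝ B))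
    (ht : ContinuousOn (Set.indicator t (fun _ => (1:ℝ))) (spectrum ℝ C)) (δ : ℝ) (hδ : 0 < δ)
    (hsep : ∀ x ∈ spectrum ℝ B ∩ s, ∀ y ∈ spectrum ℝ C ∩ t, δ ≤ |x - y|) :
    ‖spoE B s * spoE C t‖ ≤ Real.pi / 2 * (‖B - C‖ / δ) := by
  have h := spo_sylvester B C (spoE B s * spoE C t) hB hC _ _ (spo_compact B s hs) (spo_compact C t ht) δ hδ
    hsep (fun g hg h1 => by
      rw [← mul_assoc, spoE_mul_of B s hs g hg.continuousOn (fun x hx hxs => h1 x ⟨hx, hxs⟩)])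
    (fun g hg h1 => by
      rw [mul_assoc, spoE_mul_of' C t ht g hg.continuousOn (fun x hx hxs => h1 x ⟨hx, hxs⟩)])
  refine h.trans ?_
  have e : B * (spoE B s * spoE C t) - spoE B s * spoE C t * C = spoE B s * (B - C) * spoE C t := by
    rw [← mul_assoc, spoE_comm B hB s hs, mul_assoc (spoE B s) (spoE C t), ← spoE_comm C hC t ht]
    noncomm_ring
  rw [e]
  have pi := Real.pi_pos
  gcongr
  calc ‖spoE B s * (B - C) * spoE C t‖ ≤ ‖spoE B s‖ * ‖B - C‖ * ‖spoE C t‖ := norm_mul₃_le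
    _ ≤ 1 * ‖B - C‖ * 1 := by gcongr <;> exact spoE_norm_le _ _
    _ = _ := by ring

/-- the spectrum of `B` splits into a part near `ω` inside `U` and a part near `Ω` outside `U` -/
def spoSplit (B : H →L[ℂ] H) (U ω Ω : Set ℝ) (δ : ℝ) : Prop :=
  ∀ x ∈ spectrum ℝ B, (x ∈ U ∧ ∃ y ∈ ω, |x - y| ≤ δ) ∨ (x ∉ U ∧ ∃ y ∈ Ω, |x - y| ≤ δ)

lemma spoSplit_cont (B : H →L[ℂ] H) (U ω Ω : Set ℝ) (d δ : ℝ) (hδ : 2 * δ < d)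
    (hsep : ∀ x ∈ ω, ∀ y ∈ Ω, d ≤ |x - y|) (h : spoSplit B U ω Ω δ) :
    ContinuousOn (Set.indicator U (fun _ => (1:ℝ))) (spectrum ℝ B) ∧
    ContinuousOn (Set.indicator Uᶜ (fun _ => (1:ℝ))) (spectrum ℝ B) := by
  have key : ∀ u ∈ spectrum ℝ B, u ∈ U → ∀ v ∈ spectrum ℝ B, v ∉ U → d - 2 * δ ≤ |u - v| := by
    intro u hu huU v hv hvU
    rcases h u hu with ⟨_, y, hy, hyu⟩ | ⟨h1, _⟩
    · rcases h v hv with ⟨h1, _⟩ | ⟨_, z, hz, hzv⟩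
      · exact absurd h1 hvU
      · have h1 := hsep y hy z hz
        have h2 := abs_sub_le y u z
        have h3 := abs_sub_le u v z
        rw [abs_sub_comm] at hyu
        linarith
    · exact absurd huU h1
  refine ⟨spo_ind_cont _ _ (d - 2 * δ) (by linarith) key, spo_ind_cont _ _ (d - 2 * δ) (by linarith) ?_⟩
  intro u hu huU v hv hvU
  rw [abs_sub_comm]
  exact key v hv (not_not.mp hvU) u hu huU

lemma spo_pair (B C : H →L[ℂ] H) (hB : IsSelfAdjoint B) (hC : IsSelfAdjoint C) (U ω Ω : Set ℝ)
    (d δ₁ δ₂ : ℝ) (h₁ : 2 * δ₁ < d) (h₂ : 2 * δ₂ < d)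
    (hsep : ∀ x ∈ ω, ∀ y ∈ Ω, d ≤ |x - y|)
    (hBs : spoSplit B U ω Ω δ₁) (hCs : spoSplit C U ω Ω δ₂) :
    ‖spoE B U - spoE C U‖ ≤ Real.pi / 2 * (‖B - C‖ / (d - δ₁ - δ₂)) := by
  have key : ∀ (B C : H →L[ℂ] H), IsSelfAdjoint B → IsSelfAdjoint C → ∀ (δ₁ δ₂ : ℝ), 2 * δ₁ < d → 2 * δ₂ < d →
      spoSplit B U ω Ω δ₁ → spoSplit C U ω Ω δ₂ →
      ‖(1 - spoE B U) * spoE C U‖ ≤ Real.pi / 2 * (‖B - C‖ / (d - δ₁ - δ₂)) := by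
    intro B C hB hC δ₁ δ₂ h₁ h₂ hBs hCs
    have cB := spoSplit_cont B U ω Ω d δ₁ h₁ hsep hBs
    have cC := spoSplit_cont C U ω Ω d δ₂ h₂ hsep hCs
    have e : 1 - spoE B U = spoE B Uᶜ := by
      rw [sub_eq_iff_eq_add, spoE_add B Uᶜ U univ cB.2 cB.1 (fun x _ h => h)
        (fun x _ => by simp [em']), spoE_univ B hB univ (fun x _ => mem_univ x)]
    rw [e]
    refine spo_block B C hB hC _ _ cB.2 cC.1 _ (by linarith) ?_
    rintro x ⟨hx, hxU⟩ y ⟨hy, hyU⟩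
    rcases hBs x hx with ⟨h1, _⟩ | ⟨_, z, hz, hzx⟩
    · exact absurd h1 hxU
    · rcases hCs y hy with ⟨_, w, hw, hwy⟩ | ⟨h1, _⟩
      · have h1 := hsep w hw z hz
        have h2 := abs_sub_le w y z
        have h3 := abs_sub_le y x z
        rw [abs_sub_comm] at hwy
        rw [abs_sub_comm] at h3
        rw [abs_sub_comm y x] at h3
        rw [abs_sub_comm z y] at h3
        linarith
      · exact absurd hyU h1
  have cB := spoSplit_cont B U ω Ω d δ₁ h₁ hsep hBs
  have cC := spoSplit_cont C U ω Ω d δ₂ h₂ hsep hCs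
  refine spo_proj_le _ _ (spoE_sa B U) (spoE_sa C U) (spoE_idem B U cB.1) (spoE_idem C U cC.1) _
    (key B C hB hC δ₁ δ₂ h₁ h₂ hBs hCs) ?_
  have := key C B hC hB δ₂ δ₁ h₂ h₁ hCs hBs
  rwa [norm_sub_rev, sub_right_comm] at this
end

lemma spo_angle {E : Type*} [NormedAddCommGroup E] [InnerProductSpace ℝ E] (u y z : E) (a b : ℝ)
    (hu : u ≠ 0) (hy : y ≠ 0) (hz : z ≠ 0) (ha : 0 ≤ a) (hb : 0 ≤ b) (hab : a + b ≤ Real.pi)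
    (h1 : Real.cos a * (‖u‖ * ‖y‖) ≤ inner ℝ u y) (h2 : Real.cos b * (‖y‖ * ‖z‖) ≤ inner ℝ y z) :
    Real.cos (a + b) * (‖u‖ * ‖z‖) ≤ inner ℝ u z := by
  have key : ∀ (u y : E) (a : ℝ), u ≠ 0 → y ≠ 0 → 0 ≤ a → a ≤ Real.pi →
      Real.cos a * (‖u‖ * ‖y‖) ≤ inner ℝ u y → InnerProductGeometry.angle u y ≤ a := by
    intro u y a hu hy ha hap h
    have h0 : 0 < ‖u‖ * ‖y‖ := mul_pos (norm_pos_iff.mpr hu) (norm_pos_iff.mpr hy)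
    have h3 : Real.cos a ≤ Real.cos (InnerProductGeometry.angle u y) := by
      rw [InnerProductGeometry.cos_angle, le_div_iff₀ h0]; exact h
    exact (Real.strictAntiOn_cos.le_iff_ge ⟨ha, hap⟩
      ⟨InnerProductGeometry.angle_nonneg _ _, InnerProductGeometry.angle_le_pi _ _⟩).mp h3
  have k1 := key u y a hu hy ha (by linarith) h1
  have k2 := key y z b hy hz hb (by linarith) h2
  have k3 := InnerProductGeometry.angle_le_angle_add_angle u y z
  rw [← InnerProductGeometry.cos_angle_mul_norm_mul_norm u z]
  gcongr
  exact Real.cos_le_cos_of_nonneg_of_le_pi (InnerProductGeometry.angle_nonneg _ _) hab (by linarith)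

section
variable {H : Type*} [NormedAddCommGroup H] [InnerProductSpace ℂ H] [CompleteSpace H]

lemma spo_proj_sq (R : H →L[ℂ] H) (hR : IsSelfAdjoint R) (hRi : R * R = R) (u : H) :
    ‖u‖ ^ 2 = ‖R u‖ ^ 2 + ‖(1 - R) u‖ ^ 2 := by
  have h0 : inner ℂ (R u) ((1 - R) u) = 0 := by
    have e : inner ℂ (R u) ((1 - R) u) = inner ℂ u ((R * (1 - R)) u) := hR.isSymmetric u _
    rw [e, mul_sub, hRi, mul_one, sub_self]; simp
  have := norm_add_sq_eq_norm_sq_add_norm_sq_of_inner_eq_zero (𝕜 := ℂ) _ _ h0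
  simpa [pow_two] using this

lemma spo_proj_angle (R : H →L[ℂ] H) (hR : IsSelfAdjoint R) (hRi : R * R = R) (u : H) (hu : u ≠ 0)
    (a : ℝ) (ha : 0 ≤ a) (ha' : a < Real.pi / 2) (h : ‖(1 - R) u‖ ≤ Real.sin a * ‖u‖) :
    R u ≠ 0 ∧ Real.cos a * (‖u‖ * ‖R u‖) ≤ (inner ℂ u (R u)).re := by
  have hc : 0 < Real.cos a := Real.cos_pos_of_mem_Ioo ⟨by linarith [Real.pi_pos], ha'⟩
  have hun : 0 < ‖u‖ := norm_pos_iff.mpr hu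
  have h1 := spo_proj_sq R hR hRi u
  have h2 := pow_le_pow_left₀ (norm_nonneg _) h 2
  have h3 : (Real.cos a * ‖u‖) ^ 2 ≤ ‖R u‖ ^ 2 := by
    rw [mul_pow] at *
    nlinarith [Real.sin_sq_add_cos_sq a]
  have h4 : Real.cos a * ‖u‖ ≤ ‖R u‖ := (sq_le_sq₀ (by positivity) (norm_nonneg _)).mp h3
  refine ⟨norm_pos_iff.mp (lt_of_lt_of_le (by positivity) h4), ?_⟩
  have e : inner ℂ u (R u) = inner ℂ (R u) (R u) := by
    have e1 : inner ℂ (R u) (R u) = inner ℂ u ((R * R) u) := hR.isSymmetric u _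
    rw [e1, hRi]
  have e2 : (inner ℂ (R u) (R u)).re = ‖R u‖ ^ 2 := inner_self_eq_norm_sq (𝕜 := ℂ) (R u)
  rw [e, e2, ← mul_assoc, pow_two]
  gcongr

lemma spo_arcsin_half (P Q R : H →L[ℂ] H)
    (hR : IsSelfAdjoint R) (hQ : IsSelfAdjoint Q)
    (hPi : P * P = P) (hRi : R * R = R) (hQi : Q * Q = Q) (a b : ℝ) (ha : 0 ≤ a) (hb : 0 ≤ b)
    (hab : a + b < Real.pi / 2) (hPn : ‖P‖ ≤ 1)
    (h1 : ‖P - R‖ ≤ Real.sin a) (h2 : ‖R - Q‖ ≤ Real.sin b) :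
    ‖(1 - Q) * P‖ ≤ Real.sin (a + b) := by
  have hpi := Real.pi_pos
  have hs : 0 ≤ Real.sin (a + b) := Real.sin_nonneg_of_nonneg_of_le_pi (by linarith) (by linarith)
  have hsa : 0 ≤ Real.sin a := Real.sin_nonneg_of_nonneg_of_le_pi (by linarith) (by linarith)
  have hsb : 0 ≤ Real.sin b := Real.sin_nonneg_of_nonneg_of_le_pi (by linarith) (by linarith)
  refine ContinuousLinearMap.opNorm_le_bound _ hs fun x => ?_
  set u := P x with hu
  have hPu : P u = u := by
    change (P * P) x = _
    rw [hPi]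
  have hux : ‖u‖ ≤ ‖x‖ := (P.le_opNorm x).trans (mul_le_of_le_one_left (norm_nonneg _) hPn)
  change ‖(1 - Q) u‖ ≤ _
  refine le_trans ?_ (mul_le_mul_of_nonneg_left hux hs)
  by_cases hu0 : u = 0
  · simp [hu0]
  have r1 : ‖(1 - R) u‖ ≤ Real.sin a * ‖u‖ := by
    have : (1 - R) u = (P - R) u := by simp [hPu]
    rw [this]
    exact ((P - R).le_opNorm u).trans (by gcongr)
  obtain ⟨hy0, hy⟩ := spo_proj_angle R hR hRi u hu0 a ha (by linarith) r1
  have hRy : R (R u) = R u := by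
    change (R * R) u = _
    rw [hRi]
  have r2 : ‖(1 - Q) (R u)‖ ≤ Real.sin b * ‖R u‖ := by
    have : (1 - Q) (R u) = (R - Q) (R u) := by simp [hRy]
    rw [this]
    exact ((R - Q).le_opNorm _).trans (by gcongr)
  obtain ⟨hz0, hz⟩ := spo_proj_angle Q hQ hQi (R u) hy0 b hb (by linarith) r2
  have h3 : Real.cos (a + b) * (‖u‖ * ‖Q (R u)‖) ≤ (inner ℂ u (Q (R u))).re := by
    letI : InnerProductSpace ℝ H := InnerProductSpace.rclikeToReal ℂ H
    exact spo_angle u (R u) (Q (R u)) a b hu0 hy0 hz0 ha hb (by linarith) hy hz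
  have h4 : inner ℂ u (Q (R u)) = inner ℂ (Q u) (Q (R u)) := by
    have e1 : inner ℂ (Q u) (Q (R u)) = inner ℂ u ((Q * Q) (R u)) := hQ.isSymmetric u _
    rw [e1, hQi]
  have h5 : Real.cos (a + b) * ‖u‖ ≤ ‖Q u‖ := by
    have h6 : (inner ℂ (Q u) (Q (R u))).re ≤ ‖Q u‖ * ‖Q (R u)‖ :=
      (Complex.re_le_norm _).trans (norm_inner_le_norm _ _)
    rw [h4] at h3
    have : (Real.cos (a + b) * ‖u‖) * ‖Q (R u)‖ ≤ ‖Q u‖ * ‖Q (R u)‖ := by linarith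
    exact le_of_mul_le_mul_right this (norm_pos_iff.mpr hz0)
  have hc : 0 ≤ Real.cos (a + b) := Real.cos_nonneg_of_mem_Icc ⟨by linarith, by linarith⟩
  have h6 := pow_le_pow_left₀ (by positivity) h5 2
  have h7 := spo_proj_sq Q hQ hQi u
  refine (sq_le_sq₀ (norm_nonneg _) (by positivity)).mp ?_
  rw [mul_pow] at *
  nlinarith [Real.sin_sq_add_cos_sq (a + b)]

lemma spo_proj_norm (P : H →L[ℂ] H) (hP : IsSelfAdjoint P) (hPi : P * P = P) : ‖P‖ ≤ 1 := by
  refine ContinuousLinearMap.opNorm_le_bound _ zero_le_one fun x => ?_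
  rw [one_mul]
  have := spo_proj_sq P hP hPi x
  refine (sq_le_sq₀ (norm_nonneg _) (norm_nonneg _)).mp ?_
  nlinarith [sq_nonneg ‖(1 - P) x‖]

lemma spo_proj_sub_norm (P Q : H →L[ℂ] H) (hP : IsSelfAdjoint P) (hQ : IsSelfAdjoint Q)
    (hPi : P * P = P) (hQi : Q * Q = Q) : ‖P - Q‖ ≤ 1 := by
  have n : ∀ P : H →L[ℂ] H, IsSelfAdjoint P → P * P = P → ‖1 - P‖ ≤ 1 := by
    intro P hP hPi
    refine spo_proj_norm _ ((IsSelfAdjoint.one _).sub hP) ?_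
    rw [mul_sub, sub_mul, sub_mul, hPi]; simp
  refine spo_proj_le P Q hP hQ hPi hQi 1 ?_ ?_
  · exact (norm_mul_le _ _).trans (mul_le_one₀ (n P hP hPi) (norm_nonneg _) (spo_proj_norm Q hQ hQi))
  · exact (norm_mul_le _ _).trans (mul_le_one₀ (n Q hQ hQi) (norm_nonneg _) (spo_proj_norm P hP hPi))

lemma spo_arcsin_tri (P Q R : H →L[ℂ] H) (hP : IsSelfAdjoint P)
    (hR : IsSelfAdjoint R) (hQ : IsSelfAdjoint Q)
    (hPi : P * P = P) (hRi : R * R = R) (hQi : Q * Q = Q) :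
    Real.arcsin ‖P - Q‖ ≤ Real.arcsin ‖P - R‖ + Real.arcsin ‖R - Q‖ := by
  rcases le_or_gt (Real.pi / 2) (Real.arcsin ‖P - R‖ + Real.arcsin ‖R - Q‖) with h | h
  · exact (Real.arcsin_le_pi_div_two _).trans h
  have ha : 0 ≤ Real.arcsin ‖P - R‖ := Real.arcsin_nonneg.mpr (norm_nonneg _)
  have hb : 0 ≤ Real.arcsin ‖R - Q‖ := Real.arcsin_nonneg.mpr (norm_nonneg _)
  have sa : ‖P - R‖ = Real.sin (Real.arcsin ‖P - R‖) :=
    (Real.sin_arcsin (by linarith [norm_nonneg (P - R)]) (spo_proj_sub_norm P R hP hR hPi hRi)).symm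
  have sb : ‖R - Q‖ = Real.sin (Real.arcsin ‖R - Q‖) :=
    (Real.sin_arcsin (by linarith [norm_nonneg (R - Q)]) (spo_proj_sub_norm R Q hR hQ hRi hQi)).symm
  rw [Real.arcsin_le_iff_le_sin' ⟨by linarith [Real.pi_pos], h⟩]
  refine spo_proj_le P Q hP hQ hPi hQi _ ?_ ?_
  · rw [add_comm]
    exact spo_arcsin_half Q P R hR hP hQi hRi hPi _ _ hb ha (by linarith) (spo_proj_norm Q hQ hQi)
      (by rw [norm_sub_rev]; exact sb.le) (by rw [norm_sub_rev]; exact sa.le)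
  · exact spo_arcsin_half P Q R hR hQ hPi hRi hQi _ _ ha hb h (spo_proj_norm P hP hPi) sa.le sb.le
end

lemma spo_phi_pos (τ : ℝ) (h0 : 0 ≤ τ) (h : τ < Real.sqrt 3 / 2) : 0 < 2 - Real.sqrt (1 + 4 * τ ^ 2) := by
  have h3 : Real.sqrt 3 ^ 2 = 3 := Real.sq_sqrt (by norm_num)
  have : Real.sqrt (1 + 4 * τ ^ 2) < 2 := by
    rw [Real.sqrt_lt' (by norm_num)]
    nlinarith [Real.sqrt_nonneg 3]
  linarith

lemma spo_phi_contAt (τ : ℝ) (h0 : 0 ≤ τ) (h : τ < Real.sqrt 3 / 2) :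
    ContinuousAt (fun τ : ℝ => (2 - Real.sqrt (1 + 4 * τ ^ 2))⁻¹) τ := by
  have := (spo_phi_pos τ h0 h).ne'
  have h2 : ContinuousAt (fun τ : ℝ => 2 - Real.sqrt (1 + 4 * τ ^ 2)) τ := by fun_prop
  exact h2.inv₀ this

lemma spo_phi_int (w : ℝ) (h0 : 0 ≤ w) (h : w < Real.sqrt 3 / 2) :
    IntervalIntegrable (fun τ : ℝ => (2 - Real.sqrt (1 + 4 * τ ^ 2))⁻¹) volume 0 w := by
  refine ContinuousOn.intervalIntegrable fun τ hτ => ?_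
  rw [uIcc_of_le h0] at hτ
  exact (spo_phi_contAt τ hτ.1 (hτ.2.trans_lt h)).continuousWithinAt

lemma spo_ode (N : ℝ → ℝ → ℝ) (w : ℝ) (hw0 : 0 ≤ w) (hw : w < Real.sqrt 3 / 2) (hN0 : N 0 0 = 0)
    (tri : ∀ s ∈ Icc (0:ℝ) 1, ∀ t ∈ Icc (0:ℝ) 1, s ≤ t →
      |Real.arcsin (N 0 t) - Real.arcsin (N 0 s)| ≤ Real.arcsin (N s t))
    (bd : ∀ s ∈ Icc (0:ℝ) 1, ∀ t ∈ Icc (0:ℝ) 1, s ≤ t →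
      N s t ≤ (t - s) * (Real.pi / 2 * (w * (2 - Real.sqrt (1 + 4 * (t * w) ^ 2))⁻¹))) :
    Real.arcsin (N 0 1) ≤ Real.pi / 2 * ∫ τ in (0:ℝ)..w, (2 - Real.sqrt (1 + 4 * τ ^ 2))⁻¹ := by
  have hpi := Real.pi_pos
  set φ : ℝ → ℝ := fun τ => (2 - Real.sqrt (1 + 4 * τ ^ 2))⁻¹ with hφ
  set k : ℝ → ℝ := fun t => Real.pi / 2 * (w * φ (t * w)) with hk
  have htw : ∀ t ∈ Icc (0:ℝ) 1, 0 ≤ t * w ∧ t * w < Real.sqrt 3 / 2 := fun t ht =>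
    ⟨mul_nonneg ht.1 hw0, (mul_le_of_le_one_left hw0 ht.2).trans_lt hw⟩
  have hkc : ∀ t ∈ Icc (0:ℝ) 1, ContinuousAt k t := by
    intro t ht
    have h1 : ContinuousAt φ (t * w) := spo_phi_contAt _ (htw t ht).1 (htw t ht).2
    have h2 : ContinuousAt (fun t => φ (t * w)) t :=
      ContinuousAt.comp (f := fun t : ℝ => t * w) h1 (by fun_prop)
    exact continuousAt_const.mul (continuousAt_const.mul h2)
  have hk1 : ∀ t ∈ Icc (0:ℝ) 1, k t ≤ k 1 := by
    intro t ht
    have h1 := spo_phi_pos (1 * w) (htw 1 (by simp)).1 (htw 1 (by simp)).2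
    have : φ (t * w) ≤ φ (1 * w) := by
      simp only [hφ]
      refine inv_anti₀ h1 ?_
      have h3 : t * w ≤ 1 * w := mul_le_mul_of_nonneg_right ht.2 hw0
      have h4 := (htw t ht).1
      gcongr
    simp only [hk]
    gcongr
  have hcont : ContinuousOn (fun t => Real.arcsin (N 0 t)) (Icc 0 1) := by
    intro s hs
    have h1 : Tendsto (fun t => Real.arcsin (|t - s| * k 1)) (𝓝[Icc 0 1] s) (𝓝 0) := by
      have hc : Continuous (fun t => Real.arcsin (|t - s| * k 1)) := by fun_prop
      have := hc.tendsto s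
      simp only [sub_self, abs_zero, zero_mul, Real.arcsin_zero] at this
      exact this.mono_left nhdsWithin_le_nhds
    rw [ContinuousWithinAt, tendsto_iff_dist_tendsto_zero]
    refine squeeze_zero' (Eventually.of_forall fun _ => dist_nonneg) ?_ h1
    filter_upwards [self_mem_nhdsWithin] with t ht
    rw [Real.dist_eq]
    rcases le_total s t with h | h
    · refine (tri s hs t ht h).trans (Real.monotone_arcsin ((bd s hs t ht h).trans ?_))
      rw [abs_of_nonneg (by linarith)]
      exact mul_le_mul_of_nonneg_left (hk1 t ht) (by linarith)
    · rw [abs_sub_comm]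
      refine (tri t ht s hs h).trans (Real.monotone_arcsin ((bd t ht s hs h).trans ?_))
      rw [abs_sub_comm, abs_of_nonneg (by linarith)]
      exact mul_le_mul_of_nonneg_left (hk1 s hs) (by linarith)
  set B : ℝ → ℝ := fun t => Real.pi / 2 * ∫ τ in (0:ℝ)..(t * w), φ τ with hB
  have hmeas : Measurable φ := by
    simp only [hφ]; fun_prop
  have hBd : ∀ t ∈ Icc (0:ℝ) 1, HasDerivAt B (k t) t := by
    intro t ht
    have h1 : HasDerivAt (fun u => ∫ τ in (0:ℝ)..u, φ τ) (φ (t * w)) (t * w) :=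
      intervalIntegral.integral_hasDerivAt_right (spo_phi_int _ (htw t ht).1 (htw t ht).2)
        (hmeas.stronglyMeasurable.stronglyMeasurableAtFilter) (spo_phi_contAt _ (htw t ht).1 (htw t ht).2)
    have h2 : HasDerivAt (fun t : ℝ => t * w) w t := by
      simpa using (hasDerivAt_id t).mul_const w
    have h3 := (h1.comp t h2).const_mul (Real.pi / 2)
    have e : k t = Real.pi / 2 * (φ (t * w) * w) := by
      change Real.pi / 2 * (w * φ (t * w)) = _
      ring
    rw [e]
    exact h3
  have hfin := image_le_of_liminf_slope_right_le_deriv_boundary (f := fun t => Real.arcsin (N 0 t))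
    (a := 0) (b := 1) hcont (B := B) (B' := k) (by simp [hB, hN0])
    (fun t ht => (hBd t ht).continuousAt.continuousWithinAt)
    (fun t ht => (hBd t (Ico_subset_Icc_self ht)).hasDerivWithinAt) (by
      intro x hx r hr
      have hxI := Ico_subset_Icc_self hx
      refine Eventually.frequently ?_
      have h1 : HasDerivAt (fun z => (z - x) * k z) (k x) x := by
        rw [hasDerivAt_iff_tendsto_slope]
        refine ((hkc x hxI).tendsto.mono_left nhdsWithin_le_nhds).congr' ?_
        filter_upwards [self_mem_nhdsWithin] with z hz
        have : z - x ≠ 0 := sub_ne_zero.mpr hz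
        rw [slope_def_field]
        field_simp
        ring
      have h2 : HasDerivAt (fun z => Real.arcsin ((z - x) * k z)) (k x) x := by
        have h3 : HasDerivAt Real.arcsin (1 / Real.sqrt (1 - ((x - x) * k x) ^ 2)) ((x - x) * k x) :=
          Real.hasDerivAt_arcsin (by simp) (by simp)
        have h4 : HasDerivAt (fun z => Real.arcsin ((z - x) * k z))
          (1 / Real.sqrt (1 - ((x - x) * k x) ^ 2) * k x) x :=
          HasDerivAt.comp (h₂ := Real.arcsin) (h := fun z => (z - x) * k z) x h3 h1
        have e : 1 / Real.sqrt (1 - ((x - x) * k x) ^ 2) * k x = k x := by simp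
        rwa [e] at h4
      have h5 := (hasDerivAt_iff_tendsto_slope.mp h2).mono_left
        (nhdsWithin_mono x (show Ioi x ⊆ {x}ᶜ from fun z hz => ne_of_gt hz))
      filter_upwards [h5.eventually (gt_mem_nhds hr), Ioo_mem_nhdsGT hx.2] with z hz1 hz2
      refine lt_of_le_of_lt ?_ hz1
      have hzI : z ∈ Icc (0:ℝ) 1 := ⟨hx.1.trans hz2.1.le, hz2.2.le⟩
      rw [slope_def_field, slope_def_field]
      have hzx : 0 < z - x := sub_pos.mpr hz2.1
      refine div_le_div_of_nonneg_right ?_ hzx.le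
      rw [sub_self, zero_mul, Real.arcsin_zero, sub_zero]
      exact (le_abs_self _).trans ((tri x hxI z hzI hz2.1.le).trans
        (Real.monotone_arcsin (bd x hxI z hzI hz2.1.le))))
  have := hfin (x := 1) (by simp)
  simpa [hB] using this

lemma spo_delta (d y w : ℝ) (hd : 0 < d) (hy : y = w * d) (hw0 : 0 ≤ w) (hw : w < Real.sqrt 3 / 2) :
    0 ≤ (d * Real.sqrt (1 + 4 * w ^ 2) - d) / 2 ∧
    y ^ 2 = (d * Real.sqrt (1 + 4 * w ^ 2) - d) / 2 * ((d * Real.sqrt (1 + 4 * w ^ 2) - d) / 2 + d) ∧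
    2 * ((d * Real.sqrt (1 + 4 * w ^ 2) - d) / 2) < d := by
  have h1 := spo_phi_pos w hw0 hw
  have h2 : Real.sqrt (1 + 4 * w ^ 2) ^ 2 = 1 + 4 * w ^ 2 := Real.sq_sqrt (by positivity)
  have h3 : 1 ≤ Real.sqrt (1 + 4 * w ^ 2) := Real.one_le_sqrt.mpr (by nlinarith [sq_nonneg w])
  set q := Real.sqrt (1 + 4 * w ^ 2)
  refine ⟨by nlinarith, ?_, by nlinarith⟩
  rw [hy]
  linear_combination (-d ^ 2 / 4) * h2

section
variable {H : Type*} [NormedAddCommGroup H] [InnerProductSpace ℂ H] [CompleteSpace H]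

lemma spo_main (A V : H →L[ℂ] H) (hA : IsSelfAdjoint A) (hV : IsSelfAdjoint V)
    (ω Ω : Set ℝ) (hω : ω.Nonempty) (hspec : spectrum ℝ A = ω ∪ Ω)
    (d : ℝ) (hd : 0 < d) (hsep : ∀ x ∈ ω, ∀ y ∈ Ω, d ≤ |x - y|)
    (hoff₁ : spoE A ω * V * spoE A ω = 0)
    (hoff₂ : (1 - spoE A ω) * V * (1 - spoE A ω) = 0)
    (hVn : ‖V‖ / d < Real.sqrt 3 / 2) :
    Real.arcsin ‖spoE A ω - spoE (A + V) (Metric.thickening (d / 2) ω)‖ ≤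
      (Real.pi / 2) * ∫ τ in (0:ℝ)..(‖V‖ / d), (2 - Real.sqrt (1 + 4 * τ ^ 2))⁻¹ := by
  set w := ‖V‖ / d with hw
  have hw0 : 0 ≤ w := by positivity
  set U := Metric.thickening (d / 2) ω with hU
  set B : ℝ → H →L[ℂ] H := fun t => A + (t:ℂ) • V with hB
  have hsm : ∀ t : ℝ, IsSelfAdjoint ((t:ℂ) • V) := fun t =>
    IsSelfAdjoint.smul (by rw [isSelfAdjoint_iff]; exact Complex.conj_ofReal t) hV
  have hBs : ∀ t, IsSelfAdjoint (B t) := fun t => hA.add (hsm t)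
  set δ : ℝ → ℝ := fun t => (d * Real.sqrt (1 + 4 * (t * w) ^ 2) - d) / 2 with hδ
  have htw : ∀ t ∈ Icc (0:ℝ) 1, 0 ≤ t * w ∧ t * w < Real.sqrt 3 / 2 := fun t ht =>
    ⟨mul_nonneg ht.1 hw0, (mul_le_of_le_one_left hw0 ht.2).trans_lt hVn⟩
  have hdel := fun t (ht : t ∈ Icc (0:ℝ) 1) => spo_delta d (t * ‖V‖) (t * w) hd
    (by rw [hw]; field_simp) (htw t ht).1 (htw t ht).2
  have hsplit : ∀ t ∈ Icc (0:ℝ) 1, spoSplit (B t) U ω Ω (δ t) := by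
    intro t ht x hx
    obtain ⟨h1, h2, h3⟩ := hdel t ht
    obtain ⟨y, hy, hxy⟩ := spo_near A ((t:ℂ) • V) hA (hsm t) ω Ω hω hspec d hd hsep
      (by rw [mul_smul_comm, smul_mul_assoc, hoff₁, smul_zero])
      (by rw [mul_smul_comm, smul_mul_assoc, hoff₂, smul_zero])
      (t * ‖V‖) (δ t) (by rw [norm_smul, Complex.norm_real, Real.norm_of_nonneg ht.1]) h1 h2 x hx
    have hxy' : |x - y| < d / 2 := by
      change 2 * δ t < d at h3
      linarith
    rcases hy with hy | hy
    · left
      exact ⟨Metric.mem_thickening_iff.mpr ⟨y, hy, hxy'⟩, y, hy, hxy⟩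
    · right
      refine ⟨fun hxU => ?_, y, hy, hxy⟩
      obtain ⟨z, hz, hxz⟩ := Metric.mem_thickening_iff.mp hxU
      rw [Real.dist_eq] at hxz
      have h4 := hsep z hz y hy
      have h5 := abs_sub_le z x y
      rw [abs_sub_comm z x] at h5
      linarith
  have hcont := fun t (ht : t ∈ Icc (0:ℝ) 1) =>
    (spoSplit_cont (B t) U ω Ω d (δ t) (hdel t ht).2.2 hsep (hsplit t ht)).1
  set P : ℝ → H →L[ℂ] H := fun t => spoE (B t) U with hP
  have hPs : ∀ t, IsSelfAdjoint (P t) := fun t => spoE_sa _ _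
  have hPi : ∀ t ∈ Icc (0:ℝ) 1, P t * P t = P t := fun t ht => spoE_idem _ _ (hcont t ht)
  have h01 : (0:ℝ) ∈ Icc (0:ℝ) 1 := by simp
  have h0 : P 0 = spoE A ω := by
    have e : B 0 = A := by simp [hB]
    have hs0 := hsplit 0 h01
    rw [e] at hs0
    simp only [hP, e]
    refine cfc_congr fun x hx => ?_
    have hxm : x ∈ U ↔ x ∈ ω := by
      constructor
      · intro hxU
        rw [hspec] at hx
        refine hx.resolve_right fun hxΩ => ?_
        obtain ⟨z, hz, hxz⟩ := Metric.mem_thickening_iff.mp hxU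
        rw [Real.dist_eq, abs_sub_comm] at hxz
        linarith [hsep z hz x hxΩ]
      · exact fun hxω => Metric.self_subset_thickening (by linarith) ω hxω
    by_cases hxω : x ∈ ω
    · rw [indicator_of_mem (hxm.mpr hxω), indicator_of_mem hxω]
    · rw [indicator_of_notMem (fun h => hxω (hxm.mp h)), indicator_of_notMem hxω]
  have h1 : P 1 = spoE (A + V) U := by simp [hP, hB]
  rw [← h0, ← h1]
  refine (spo_ode (fun s t => ‖P s - P t‖) w hw0 hVn (by simp) ?_ ?_)
  · intro s hs t ht _
    have a1 := spo_arcsin_tri (P 0) (P t) (P s) (hPs 0) (hPs s) (hPs t) (hPi 0 h01) (hPi s hs) (hPi t ht)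
    have a2 := spo_arcsin_tri (P 0) (P s) (P t) (hPs 0) (hPs t) (hPs s) (hPi 0 h01) (hPi t ht) (hPi s hs)
    rw [norm_sub_rev (P t) (P s)] at a2
    rw [abs_le]
    constructor <;> linarith
  · intro s hs t ht hst
    have hb := spo_pair (B s) (B t) (hBs s) (hBs t) U ω Ω d (δ s) (δ t) (hdel s hs).2.2 (hdel t ht).2.2
      hsep (hsplit s hs) (hsplit t ht)
    refine hb.trans ?_
    have e1 : ‖B s - B t‖ = (t - s) * ‖V‖ := by
      have : B s - B t = ((s - t : ℝ) : ℂ) • V := by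
        simp only [hB]; push_cast; rw [sub_smul]; abel
      rw [this, norm_smul, Complex.norm_real, Real.norm_eq_abs, abs_sub_comm, abs_of_nonneg (by linarith)]
    have hpos := spo_phi_pos (t * w) (htw t ht).1 (htw t ht).2
    have e2 : d * (2 - Real.sqrt (1 + 4 * (t * w) ^ 2)) ≤ d - δ s - δ t := by
      have : Real.sqrt (1 + 4 * (s * w) ^ 2) ≤ Real.sqrt (1 + 4 * (t * w) ^ 2) := by
        have h3 : s * w ≤ t * w := mul_le_mul_of_nonneg_right hst hw0
        have h4 := (htw s hs).1
        gcongr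
      simp only [hδ]
      nlinarith
    rw [e1]
    have hpi := Real.pi_pos
    have hts : 0 ≤ t - s := by linarith
    calc Real.pi / 2 * ((t - s) * ‖V‖ / (d - δ s - δ t))
        ≤ Real.pi / 2 * ((t - s) * ‖V‖ / (d * (2 - Real.sqrt (1 + 4 * (t * w) ^ 2)))) := by
          gcongr
      _ = _ := by rw [hw]; field_simp
end

end

/-- Let `A, V` be bounded self-adjoint operators, `spec(A) = ω ∪ Ω` with
`d := dist(ω,Ω) > 0`, `P` the spectral projection of `A` associated with `ω`, and let `V` be
off-diagonal with respect to `H = Ran P ⊕ ker P`. Let `c⋆` be the unique positive root of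
`∫_0^{c⋆} (2 − √(1+4τ²))⁻¹ dτ = 1` (one has `c⋆ < √3/2`). If `‖V‖ < c⋆·d` then, with `Q` the
spectral projection of `A + V` associated with the part of its spectrum in `O_{d/2}(ω)`,
`‖P − Q‖ ≤ sin((π/2)·∫_0^{‖V‖/d} (2 − √(1+4τ²))⁻¹ dτ) < 1`. -/
theorem subspace_perturbation_offdiagonal {H : Type*} [NormedAddCommGroup H]
    [InnerProductSpace ℂ H] [CompleteSpace H] [TopologicalSpace.SeparableSpace H]
    (A V : H →L[ℂ] H) (hA : IsSelfAdjoint A) (hV : IsSelfAdjoint V)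
    (ω Ω : Set ℝ) (hω : ω.Nonempty) (hΩ : Ω.Nonempty)
    (hωc : IsClosed ω) (hΩc : IsClosed Ω)
    (hspec : spectrum ℝ A = ω ∪ Ω)
    (d : ℝ) (hd : d = setDist ω Ω) (hdpos : 0 < d)
    (hoff₁ : spectralProj A ω * V * spectralProj A ω = 0)
    (hoff₂ : (1 - spectralProj A ω) * V * (1 - spectralProj A ω) = 0)
    (c : ℝ) (hc : 0 < c) (hc' : c < Real.sqrt 3 / 2)
    (hcroot : (∫ τ in (0:ℝ)..c, (2 - Real.sqrt (1 + 4 * τ ^ 2))⁻¹) = 1)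
    (hVn : ‖V‖ < c * d) :
    ‖spectralProj A ω - spectralProj (A + V) (Metric.thickening (d / 2) ω)‖ ≤
        Real.sin ((Real.pi / 2) *
          ∫ τ in (0:ℝ)..(‖V‖ / d), (2 - Real.sqrt (1 + 4 * τ ^ 2))⁻¹) ∧
      Real.sin ((Real.pi / 2) *
          ∫ τ in (0:ℝ)..(‖V‖ / d), (2 - Real.sqrt (1 + 4 * τ ^ 2))⁻¹) < 1 := by
  have hsep : ∀ x ∈ ω, ∀ y ∈ Ω, d ≤ |x - y| := by
    intro x hx y hy
    rw [hd, setDist, ← Real.dist_eq]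
    exact csInf_le ⟨0, by rintro _ ⟨a, _, b, _, rfl⟩; exact dist_nonneg⟩ ⟨x, hx, y, hy, rfl⟩
  have hwc : ‖V‖ / d < c := (div_lt_iff₀ hdpos).mpr hVn
  have hw0 : 0 ≤ ‖V‖ / d := by positivity
  have hmain := spo_main A V hA hV ω Ω hω hspec d hdpos hsep hoff₁ hoff₂ (hwc.trans hc')
  have hpi := Real.pi_pos
  set I := ∫ τ in (0:ℝ)..(‖V‖ / d), (2 - Real.sqrt (1 + 4 * τ ^ 2))⁻¹ with hI
  have hlt : I < 1 := by
    have hi1 := spo_phi_int c hc.le hc'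
    have hi2 := spo_phi_int _ hw0 (hwc.trans hc')
    have hi3 : IntervalIntegrable (fun τ : ℝ => (2 - Real.sqrt (1 + 4 * τ ^ 2))⁻¹) MeasureTheory.volume (‖V‖ / d) c :=
      hi2.symm.trans hi1
    have hadd := intervalIntegral.integral_add_adjacent_intervals hi2 hi3
    have hpos : 0 < ∫ τ in (‖V‖ / d)..c, (2 - Real.sqrt (1 + 4 * τ ^ 2))⁻¹ :=
      intervalIntegral.intervalIntegral_pos_of_pos_on hi3 (fun τ hτ =>
        inv_pos.mpr (spo_phi_pos τ (hw0.trans hτ.1.le) (hτ.2.trans hc'))) hwc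
    linarith
  have h0 : 0 ≤ Real.arcsin ‖spectralProj A ω - spectralProj (A + V) (Metric.thickening (d / 2) ω)‖ :=
    Real.arcsin_nonneg.mpr (norm_nonneg _)
  have hmain' : Real.arcsin ‖spectralProj A ω - spectralProj (A + V) (Metric.thickening (d / 2) ω)‖
    ≤ Real.pi / 2 * I := hmain
  have hI0 : 0 ≤ Real.pi / 2 * I := h0.trans hmain'
  have hI1 : Real.pi / 2 * I < Real.pi / 2 := by nlinarith
  constructor
  · exact (Real.arcsin_le_iff_le_sin' ⟨by linarith, hI1⟩).mp hmain'
  · rw [← Real.sin_pi_div_two]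
    exact Real.sin_lt_sin_of_lt_of_le_pi_div_two (by linarith) le_rfl hI1
end

section
/- Let I ⊂ ℝ be an interval and let t ↦ B_t be a C¹-smooth (in operator norm) path of bounded self-adjoint operators on H. Assume that for each t ∈ I there are nonempty closed sets ω_t, Ω_t ⊂ ℝ with spectrum(B_t) = ω_t ∪ Ω_t and dist(ω_t, Ω_t) > 0, and that the families {ω_t}_{t∈I} and {Ω_t}_{t∈I} are upper semicontinuous on I. Let P_t denote the spectral projection of B_t associated with ω_t. Then the path I ∋ t ↦ P_t is C¹-smooth in operator norm. -/
open ContinuousLinearMap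

/-- Local smooth square root near `1` in a Banach algebra. -/
lemma exists_local_sqrt (A : Type*) [NormedRing A] [NormedAlgebra ℝ A] [CompleteSpace A] :
    ∃ (L : A → A) (η : ℝ), 0 < η ∧ (∀ T : A, ‖T - 1‖ < η → ContDiffAt ℝ 1 L T) ∧
      (∀ R : A, ‖R - 1‖ < η → L (R * R) = R) := by
  have hc : ContDiffAt ℝ 1 (fun x : A => x * x) 1 := (contDiff_id.mul contDiff_id).contDiffAt
  let e : A ≃L[ℝ] A := ContinuousLinearEquiv.smulLeft (Units.mk0 (2:ℝ) two_ne_zero)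
  have hd : HasFDerivAt (fun x : A => x * x) (e : A →L[ℝ] A) 1 := by
    have h := (hasFDerivAt_id (𝕜 := ℝ) (1 : A)).mul' (hasFDerivAt_id (𝕜 := ℝ) (1 : A))
    refine h.congr_fderiv ?_
    ext x
    simp [e, two_smul, Units.smul_def]
  have h1 := hc.to_localInverse hd one_ne_zero
  have h2 := (h1.eventually (by simp))
  have h3 := (hc.hasStrictFDerivAt' hd one_ne_zero).eventually_left_inverse
  rw [mul_one] at h2
  obtain ⟨a, ha, h2⟩ := Metric.eventually_nhds_iff.1 h2
  obtain ⟨b, hb, h3⟩ := Metric.eventually_nhds_iff.1 h3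
  refine ⟨hc.localInverse hd one_ne_zero, min a b, lt_min ha hb, ?_, ?_⟩
  · intro T hT
    exact h2 (by rw [dist_eq_norm]; exact hT.trans_le (min_le_left _ _))
  · intro R hR
    exact h3 (by rw [dist_eq_norm]; exact hR.trans_le (min_le_right _ _))

/-- Let `t ↦ B_t` be a `C¹`-smooth path of bounded self-adjoint operators on
an interval `I`, whose spectra split as `ω_t ∪ Ω_t` into nonempty closed sets at positive
distance, depending upper semicontinuously on `t`. Then the path of the corresponding spectral
projections `t ↦ P_t` is `C¹`-smooth in operator norm on `I`. -/
theorem spectralProj_contDiffOn {H : Type*} [NormedAddCommGroup H]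
    [InnerProductSpace ℂ H] [CompleteSpace H] [TopologicalSpace.SeparableSpace H]
    (I : Set ℝ) (hI : I.OrdConnected)
    (B : ℝ → (H →L[ℂ] H)) (hBsa : ∀ t ∈ I, IsSelfAdjoint (B t))
    (hB : ContDiffOn ℝ 1 B I)
    (ω Ω : ℝ → Set ℝ)
    (hne : ∀ t ∈ I, (ω t).Nonempty ∧ (Ω t).Nonempty)
    (hcl : ∀ t ∈ I, IsClosed (ω t) ∧ IsClosed (Ω t))
    (hspec : ∀ t ∈ I, spectrum ℝ (B t) = ω t ∪ Ω t)
    (hdist : ∀ t ∈ I, 0 < setDist (ω t) (Ω t))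
    (huscω : UpperSemicontinuousFamilyOn ω I)
    (huscΩ : UpperSemicontinuousFamilyOn Ω I) :
    ContDiffOn ℝ 1 (fun t => spectralProj (B t) (ω t)) I := by
  intro t ht
  obtain ⟨L, η, hη, hL1, hL2⟩ := exists_local_sqrt (H →L[ℂ] H)
  have hdd : ∀ s ∈ I, ∀ x ∈ ω s, ∀ y ∈ Ω s, setDist (ω s) (Ω s) ≤ dist x y := by
    intro s _ x hx y hy
    refine csInf_le ⟨0, ?_⟩ ⟨x, hx, y, hy, rfl⟩
    rintro _ ⟨a, _, b, _, rfl⟩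
    exact dist_nonneg
  have hd := hdist t ht
  have hdt := hdd t ht
  set d := setDist (ω t) (Ω t) with hd_def
  obtain ⟨δ₁, hδ₁, hω⟩ := huscω t ht (d / 4) (by positivity)
  obtain ⟨δ₂, hδ₂, hΩ⟩ := huscΩ t ht (d / 4) (by positivity)
  -- the continuous sign function
  let f : ℝ → ℝ := fun x =>
    max (-1) (min 1 ((Metric.infDist x (Ω t) - Metric.infDist x (ω t)) * (2 / d)))
  have hf : Continuous f := by
    have h1 := Metric.continuous_infDist_pt (ω t)
    have h2 := Metric.continuous_infDist_pt (Ω t)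
    fun_prop
  have hf1 : ∀ x ∈ Metric.thickening (d / 4) (ω t), f x = 1 := by
    intro x hx
    obtain ⟨z, hz, hxz⟩ := Metric.mem_thickening_iff.1 hx
    have h1 : Metric.infDist x (ω t) ≤ dist x z := Metric.infDist_le_dist_of_mem hz
    have h2 : 3 * d / 4 ≤ Metric.infDist x (Ω t) := by
      refine (Metric.le_infDist (hne t ht).2).2 fun y hy => ?_
      have := hdt z hz y hy
      have := dist_triangle_left z y x
      linarith
    have h3 : 1 ≤ (Metric.infDist x (Ω t) - Metric.infDist x (ω t)) * (2 / d) := by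
      rw [mul_div_assoc', le_div_iff₀ hd]; linarith
    simp only [f]
    rw [min_eq_left h3]; norm_num
  have hf2 : ∀ x ∈ Metric.thickening (d / 4) (Ω t), f x = -1 := by
    intro x hx
    obtain ⟨z, hz, hxz⟩ := Metric.mem_thickening_iff.1 hx
    have h1 : Metric.infDist x (Ω t) ≤ dist x z := Metric.infDist_le_dist_of_mem hz
    have h2 : 3 * d / 4 ≤ Metric.infDist x (ω t) := by
      refine (Metric.le_infDist (hne t ht).1).2 fun y hy => ?_
      have := hdt y hy z hz
      have := dist_triangle_left y z x
      have := dist_comm x y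
      linarith
    have h3 : (Metric.infDist x (Ω t) - Metric.infDist x (ω t)) * (2 / d) ≤ -1 := by
      rw [mul_div_assoc', div_le_iff₀ hd]; linarith
    simp only [f]
    exact max_eq_left ((min_le_right _ _).trans h3)
  -- polynomial approximation
  set M : ℝ := (‖B t‖ + 1) * ‖(1 : H →L[ℂ] H)‖ with hM
  set ε : ℝ := min (1 / 2) (η / 4) with hε
  have hε0 : 0 < ε := lt_min (by norm_num) (by positivity)
  have hε1 : ε ≤ 1 / 2 := min_le_left _ _
  have hε2 : ε ≤ η / 4 := min_le_right _ _
  obtain ⟨p, hp⟩ := exists_polynomial_near_of_continuousOn (-M) M f hf.continuousOn ε hε0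
  have hpc : Continuous fun x : ℝ => p.eval x := p.continuous
  -- key facts for a single good parameter
  have key : ∀ s ∈ I, |s - t| < δ₁ → |s - t| < δ₂ → ‖B s‖ ≤ ‖B t‖ + 1 →
      ‖Polynomial.aeval (B s) p * Polynomial.aeval (B s) p - 1‖ < η ∧
      IsUnit (L (Polynomial.aeval (B s) p * Polynomial.aeval (B s) p)) ∧
      spectralProj (B s) (ω s) = (1 / 2 : ℝ) • (1 + Polynomial.aeval (B s) p *
        Ring.inverse (L (Polynomial.aeval (B s) p * Polynomial.aeval (B s) p))) := by
    intro s hs h1 h2 hBs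
    have hsa := hBsa s hs
    have hω' := hω s hs h1
    have hΩ' := hΩ s hs h2
    have hcase : ∀ x ∈ spectrum ℝ (B s),
        (x ∈ ω s ∧ f x = 1 ∨ x ∉ ω s ∧ f x = -1) ∧ |p.eval x - f x| < ε := by
      intro x hx
      refine ⟨?_, hp x ?_⟩
      · have hx' := hx
        rw [hspec s hs] at hx'
        rcases hx' with h | h
        · exact Or.inl ⟨h, hf1 x (hω' h)⟩
        · refine Or.inr ⟨fun h' => ?_, hf2 x (hΩ' h)⟩
          have := hf1 x (hω' h')
          have := hf2 x (hΩ' h)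
          linarith
      · have h := spectrum.norm_le_norm_mul_of_mem hx
        have : |x| ≤ M := by
          rw [← Real.norm_eq_abs]
          exact h.trans (mul_le_mul_of_nonneg_right hBs (norm_nonneg _))
        exact abs_le.1 this
    set A := Polynomial.aeval (B s) p with hA
    have hAc : cfc (fun x : ℝ => p.eval x) (B s) = A := cfc_polynomial p (B s)
    set R := cfc (fun x : ℝ => |p.eval x|) (B s) with hR
    have hRR : R * R = A * A := by
      rw [hR, ← hAc, ← cfc_mul _ _ _ (by fun_prop) (by fun_prop),
        ← cfc_mul _ _ _ (by fun_prop) (by fun_prop)]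
      simp only [abs_mul_abs_self]
    have hone : (1 : H →L[ℂ] H) = cfc (fun _ : ℝ => (1:ℝ)) (B s) := (cfc_const_one ℝ (B s)).symm
    have hRn : ‖R - 1‖ ≤ ε := by
      rw [hR, hone, ← cfc_sub _ _ _ (by fun_prop) (by fun_prop)]
      refine norm_cfc_le hε0.le fun x hx => ?_
      obtain ⟨h | h, h'⟩ := hcase x hx
      · rw [h.2] at h'
        have h3 := abs_abs_sub_abs_le_abs_sub (p.eval x) 1
        rw [abs_one] at h3
        exact (h3.trans h'.le)
      · rw [h.2] at h'
        have h3 := abs_abs_sub_abs_le_abs_sub (p.eval x) (-1)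
        rw [abs_neg, abs_one] at h3
        exact (h3.trans h'.le)
    have hAn : ‖A * A - 1‖ < η := by
      rw [← hRR]
      have e1 : R * R - 1 = (R - 1) * (R - 1) + ((R - 1) + (R - 1)) := by noncomm_ring
      rw [e1]
      have a1 := norm_add_le ((R - 1) * (R - 1)) ((R - 1) + (R - 1))
      have a2 := norm_add_le (R - 1) (R - 1)
      have a3 := norm_mul_le (R - 1) (R - 1)
      have a4 := norm_nonneg (R - 1)
      nlinarith
    have hLR : L (A * A) = R := by
      rw [← hRR]
      exact hL2 R (by linarith)
    have hRu : IsUnit R := by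
      have h3 : ‖1 - R‖ < 1 := by rw [norm_sub_rev]; linarith
      have := isUnit_one_sub_of_norm_lt_one h3
      simpa using this
    refine ⟨hAn, hLR ▸ hRu, ?_⟩
    rw [hLR]
    have hfR : cfc f (B s) * R = A := by
      rw [hR, ← hAc, ← cfc_mul _ _ _ (by fun_prop) (by fun_prop)]
      refine cfc_congr fun x hx => ?_
      obtain ⟨h | h, h'⟩ := hcase x hx
      · simp only [h.2] at h' ⊢
        have := abs_lt.1 h'
        rw [abs_of_pos (by linarith)]; ring
      · simp only [h.2] at h' ⊢
        have := abs_lt.1 h'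
        rw [abs_of_neg (by linarith)]; ring
    have hfA : A * Ring.inverse R = cfc f (B s) := by
      rw [← hfR, Ring.mul_inverse_cancel_right _ _ hRu]
    rw [hfA, hone, ← cfc_add _ _ _ (by fun_prop) (by fun_prop),
      ← cfc_smul _ _ _ (by fun_prop), spectralProj]
    refine cfc_congr fun x hx => ?_
    obtain ⟨h | h, h'⟩ := hcase x hx
    · simp only [Set.indicator_of_mem h.1, h.2]; norm_num
    · simp only [Set.indicator_of_notMem h.1, h.2]; norm_num
  obtain ⟨k1, k2, k3⟩ := key t ht (by simpa using hδ₁) (by simpa using hδ₂) (by linarith)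
  have hA : ContDiffWithinAt ℝ 1 (fun s => Polynomial.aeval (B s) p) I t := by
    have hq : ContDiff ℝ 1 (fun X : H →L[ℂ] H => Polynomial.aeval X p) := by
      simp only [Polynomial.aeval_eq_sum_range]
      exact ContDiff.sum fun i _ => (contDiff_id.pow i).const_smul _
    exact hq.contDiffAt.comp_contDiffWithinAt t (hB t ht)
  have hLA := (hL1 _ k1).comp_contDiffWithinAt t (hA.mul hA)
  obtain ⟨u, hu⟩ := k2
  have hinv : ContDiffAt ℝ 1 Ring.inverse
      (L (Polynomial.aeval (B t) p * Polynomial.aeval (B t) p)) := by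
    rw [← hu]; exact contDiffAt_ringInverse ℝ u
  have hfin := ((contDiffWithinAt_const (c := (1 : H →L[ℂ] H))).add
    (hA.mul (hinv.comp_contDiffWithinAt t hLA))).const_smul (1 / 2 : ℝ)
  refine hfin.congr_of_eventuallyEq ?_ k3
  have hBc : ContinuousWithinAt (fun s => ‖B s‖) I t := (hB t ht).continuousWithinAt.norm
  have ev1 : ∀ᶠ s in nhdsWithin t I, ‖B s‖ < ‖B t‖ + 1 :=
    hBc.eventually (gt_mem_nhds (by linarith))
  have ev2 : ∀ᶠ s in nhdsWithin t I, dist s t < min δ₁ δ₂ :=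
    nhdsWithin_le_nhds (Metric.ball_mem_nhds t (lt_min hδ₁ hδ₂))
  filter_upwards [ev1, ev2, self_mem_nhdsWithin] with s h1 h2 hs
  rw [Real.dist_eq] at h2
  exact (key s hs (h2.trans_le (min_le_left _ _)) (h2.trans_le (min_le_right _ _)) h1.le).2.2
end

section
/- For every p ∈ (0,1), the regularized discrete Hilbert transform H_p, defined on ℓ²(ℤ, ℂ) by (H_p a)_m = Σ_{n∈ℤ} a_n / (m − n + p), is a well-defined bounded linear operator, and its operator norm equals π / sin(π p). -/
open MeasureTheory in
/-- The unimodular twist `x ↦ exp (-2πipx)` on the circle. -/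
noncomputable def dhtTwist (p : ℝ) : AddCircle (1:ℝ) → ℂ :=
  AddCircle.liftIoc 1 0 (fun x : ℝ => Complex.exp (-(2 * Real.pi * Complex.I * p) * x))

theorem dhtTwist_norm (p : ℝ) (x : AddCircle (1:ℝ)) : ‖dhtTwist p x‖ = 1 := by
  simp only [dhtTwist, AddCircle.liftIoc, Function.comp, Set.domRestrict_apply]
  rw [Complex.norm_exp]
  simp

theorem dhtTwist_measurable (p : ℝ) : Measurable (dhtTwist p) := by
  have h := (AddCircle.measurableEquivIoc (1:ℝ) 0).measurable
  have h2 : Measurable (fun x : ℝ => Complex.exp (-(2 * Real.pi * Complex.I * p) * x)) := by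
    fun_prop
  exact h2.comp (measurable_subtype_coe.comp h)

theorem dhtTwist_coeff (p : ℝ) (hp : p ∈ Set.Ioo (0:ℝ) 1) (k : ℤ) :
    fourierCoeff (dhtTwist p) k =
      Complex.exp (-(Real.pi * p * Complex.I)) * (Real.sin (Real.pi * p) / Real.pi : ℝ)
        * (1 / ((k : ℂ) + p)) := by
  have hkp : (k : ℂ) + p ≠ 0 := by
    intro h
    have h' : (k : ℝ) + p = 0 := by exact_mod_cast h
    have h1 : (-1 : ℝ) < k := by linarith [hp.2]
    have h2 : (k : ℝ) < 0 := by linarith [hp.1]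
    have h3 : (-1 : ℤ) < k := by exact_mod_cast h1
    have h4 : k < 0 := by exact_mod_cast h2
    omega
  have hpi : (Real.pi : ℂ) ≠ 0 := by exact_mod_cast Real.pi_ne_zero
  have hc : -(2 * Real.pi * Complex.I * ((k : ℂ) + p)) ≠ 0 := by
    simp [hkp, hpi]
  rw [dhtTwist, fourierCoeff_liftIoc_eq, fourierCoeffOn_eq_integral]
  have : ∀ x : ℝ, (fourier (-k) (x : AddCircle ((0:ℝ) + 1 - 0)) : ℂ) •
      Complex.exp (-(2 * Real.pi * Complex.I * p) * x) =
      Complex.exp (-(2 * Real.pi * Complex.I * ((k : ℂ) + p)) * x) := by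
    intro x
    rw [fourier_coe_apply, smul_eq_mul, ← Complex.exp_add]
    congr 1
    push_cast
    ring
  simp_rw [this]
  rw [integral_exp_mul_complex hc]
  have e1 : Complex.exp (-(2 * Real.pi * Complex.I * ((k : ℂ) + p)) * ((0 + 1 : ℝ) : ℂ)) =
      Complex.exp (-(Real.pi * p * Complex.I)) * Complex.exp (-(Real.pi * p * Complex.I)) := by
    rw [← Complex.exp_add, Complex.exp_eq_exp_iff_exists_int]
    refine ⟨-k, ?_⟩
    push_cast
    ring
  rw [e1]
  have e2 : Complex.exp (-(Real.pi * p * Complex.I)) * Complex.exp (Real.pi * p * Complex.I) = 1 := by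
    rw [← Complex.exp_add]; simp
  have e3 : ((Real.sin (Real.pi * p) / Real.pi : ℝ) : ℂ) =
      (Complex.exp (-(Real.pi * p * Complex.I)) - Complex.exp (Real.pi * p * Complex.I))
        * Complex.I / 2 / Real.pi := by
    push_cast
    rw [Complex.sin]
    ring_nf
  rw [e3]
  simp only [Complex.ofReal_zero, mul_zero, Complex.exp_zero, zero_add, sub_zero, div_one, one_smul]
  generalize Complex.exp (-(Real.pi * p * Complex.I)) = u at *
  generalize Complex.exp (Real.pi * p * Complex.I) = v at *
  have hI : Complex.I ≠ 0 := Complex.I_ne_zero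
  field_simp
  rw [Complex.I_sq]
  linear_combination (-1 : ℂ) * e2

open MeasureTheory AddCircle in
theorem dht_memLp (p : ℝ) (n : ℤ) :
    MemLp (fun x : AddCircle (1:ℝ) => dhtTwist p x * fourier n x) 2 haarAddCircle := by
  refine MemLp.of_bound (C := 1) ?_ ?_
  · exact ((dhtTwist_measurable p).mul (fourier n).continuous.measurable).aestronglyMeasurable
  · refine Filter.Eventually.of_forall fun x => ?_
    rw [norm_mul, dhtTwist_norm, fourier_apply, Circle.norm_coe, one_mul]

open MeasureTheory AddCircle in
/-- The twisted orthonormal family. -/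
noncomputable def dhtVec (p : ℝ) (n : ℤ) : Lp ℂ 2 (@haarAddCircle (1:ℝ) _) :=
  (dht_memLp p n).toLp _

open MeasureTheory AddCircle in
theorem dhtVec_orthonormal (p : ℝ) : Orthonormal ℂ (dhtVec p) := by
  have h := orthonormal_fourier (T := (1:ℝ))
  rw [orthonormal_iff_ite] at h ⊢
  intro i j
  rw [← h i j, L2.inner_def, L2.inner_def]
  apply integral_congr_ae
  filter_upwards [coeFn_fourierLp 2 i, coeFn_fourierLp 2 j, (dht_memLp p i).coeFn_toLp,
    (dht_memLp p j).coeFn_toLp] with x h1 h2 h3 h4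
  rw [h1, h2, dhtVec, dhtVec, h3, h4]
  simp only [RCLike.inner_apply', map_mul]
  have := Complex.conj_mul' (dhtTwist p x)
  rw [dhtTwist_norm, Complex.ofReal_one] at this
  linear_combination (starRingEnd ℂ) (fourier i x) * fourier j x * this

open MeasureTheory AddCircle in
theorem dhtVec_inner (p : ℝ) (m n : ℤ) :
    (fourierBasis (T := (1:ℝ))).repr (dhtVec p n) m = fourierCoeff (dhtTwist p) (m - n) := by
  rw [fourierBasis_repr, dhtVec, fourierCoeff_congr_ae (dht_memLp p n).coeFn_toLp]
  unfold fourierCoeff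
  congr 1
  ext x
  rw [neg_sub, sub_eq_add_neg, fourier_add]
  simp only [smul_eq_mul]
  ring

/-- For `p ∈ (0,1)` the regularized discrete Hilbert transform
`(H_p a)_m = Σ_{n ∈ ℤ} a_n/(m − n + p)` is a well-defined bounded linear operator on
`ℓ²(ℤ, ℂ)` with operator norm `π / sin(πp)`. -/
theorem regularized_discrete_hilbert_transform_norm (p : ℝ) (hp : p ∈ Set.Ioo (0:ℝ) 1) :
    (∀ (a : lp (fun _ : ℤ => ℂ) 2) (m : ℤ),
      Summable fun n : ℤ => a n / ((m : ℂ) - (n : ℂ) + (p : ℂ))) ∧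
    ∃ T : lp (fun _ : ℤ => ℂ) 2 →L[ℂ] lp (fun _ : ℤ => ℂ) 2,
      (∀ (a : lp (fun _ : ℤ => ℂ) 2) (m : ℤ),
        T a m = ∑' n : ℤ, a n / ((m : ℂ) - (n : ℂ) + (p : ℂ))) ∧
      ‖T‖ = Real.pi / Real.sin (Real.pi * p) := by
  have hsin : 0 < Real.sin (Real.pi * p) := by
    apply Real.sin_pos_of_pos_of_lt_pi
    · exact mul_pos Real.pi_pos hp.1
    · nlinarith [Real.pi_pos, hp.2]
  set V := (dhtVec_orthonormal p).orthogonalFamily.linearIsometry with hV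
  set W := (fourierBasis (T := (1:ℝ))).repr.toLinearIsometry.comp V with hW
  set c : ℂ := Complex.exp (Real.pi * p * Complex.I) * (Real.pi / Real.sin (Real.pi * p) : ℝ) with hc
  have key : ∀ (a : lp (fun _ : ℤ => ℂ) 2) (m : ℤ),
      HasSum (fun n : ℤ => a n / ((m : ℂ) - (n : ℂ) + (p : ℂ))) (c * W a m) := by
    intro a m
    have h1 := (dhtVec_orthonormal p).orthogonalFamily.hasSum_linearIsometry a
    have h2 := h1.mapL (innerSL ℂ (fourierBasis (T := (1:ℝ)) m))
    have h3 := h2.mul_left c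
    convert! h3 using 1
    · ext n
      have h4 := dhtVec_inner p m n
      rw [dhtTwist_coeff p hp, HilbertBasis.repr_apply_apply] at h4
      simp only [LinearIsometry.toSpanSingleton_apply, innerSL_apply_apply, inner_smul_right, h4, hc]
      have e2 : Complex.exp (Real.pi * p * Complex.I) * Complex.exp (-(Real.pi * p * Complex.I)) = 1 := by
        rw [← Complex.exp_add]; simp
      have e3 : ((Real.pi / Real.sin (Real.pi * p) : ℝ) : ℂ) *
          ((Real.sin (Real.pi * p) / Real.pi : ℝ) : ℂ) = 1 := by
        rw [← Complex.ofReal_mul]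
        have := Real.pi_ne_zero
        have := hsin.ne'
        norm_cast
        field_simp
      push_cast [Int.cast_sub] at e3 ⊢
      generalize Complex.exp (Real.pi * p * Complex.I) = u at *
      generalize Complex.exp (-(Real.pi * p * Complex.I)) = v at *
      rw [div_eq_mul_one_div]
      generalize 1 / ((m:ℂ) - n + p) = w at *
      linear_combination (-(a n) * w) * e2 - (a n * w * u * v) * e3
    · rw [innerSL_apply_apply, ← HilbertBasis.repr_apply_apply]
      rfl
  refine ⟨fun a m => (key a m).summable, c • W.toContinuousLinearMap, fun a m => ?_, ?_⟩
  · rw [(key a m).tsum_eq]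
    rfl
  · have : Nontrivial (lp (fun _ : ℤ => ℂ) 2) := by
      refine ⟨lp.single 2 0 1, 0, fun h => ?_⟩
      have := congrArg (fun f : lp (fun _ : ℤ => ℂ) 2 => f 0) h
      simp at this
    rw [norm_smul, LinearIsometry.norm_toContinuousLinearMap, hc, norm_mul, mul_one,
      Complex.norm_real, Real.norm_of_nonneg (div_nonneg Real.pi_pos.le hsin.le)]
    have := Complex.norm_exp_ofReal_mul_I (Real.pi * p)
    push_cast at this
    rw [this, one_mul]
end
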